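/- arXiv:1609.02050 — 11 statements merged into one kernel-verified Lean document; each statement's English description precedes it below -/
import Mathlib

section
/- Let X ⊆ ℝ^d be a t-bonded set, x ∈ X, ρ > 0, and suppose X \ C_x(ρ) is nonempty. Then there exists a point x' ∈ C_x(ρ + t) \ C_x(ρ) that is joined to x by a t-chain all of whose points lie in C_x(ρ + t). -/
open Metric

/-- A Delone set in `ℝ^d` with parameters `r, R > 0`: every open ball of radius `r`
contains at most one point of `X` and every closed ball of radius `R` contains at
least one point of `X`. -/
def IsDeloneSet {d : ℕ} (X : Set (EuclideanSpace ℝ (Fin d))) (r R : ℝ) : Prop :=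
  0 < r ∧ 0 < R ∧
    (∀ c : EuclideanSpace ℝ (Fin d), (X ∩ Metric.ball c r).Subsingleton) ∧
    (∀ c : EuclideanSpace ℝ (Fin d), (X ∩ Metric.closedBall c R).Nonempty)

/-- A `t`-chain in `X` joining `x` to `x'`: a finite sequence of points of `X`
starting at `x`, ending at `x'`, with consecutive distances at most `t`. -/
def TChain {d : ℕ} (X : Set (EuclideanSpace ℝ (Fin d))) (t : ℝ)
    (x x' : EuclideanSpace ℝ (Fin d)) : Prop :=
  ∃ (m : ℕ) (c : ℕ → EuclideanSpace ℝ (Fin d)),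
    c 0 = x ∧ c m = x' ∧ (∀ i ≤ m, c i ∈ X) ∧
    ∀ i < m, dist (c i) (c (i + 1)) ≤ t

/-- `X` is uniformly discrete: some open ball radius `r > 0` so that every open
ball of radius `r` contains at most one point of `X`. -/
def UniformlyDiscrete {d : ℕ} (X : Set (EuclideanSpace ℝ (Fin d))) : Prop :=
  ∃ r > 0, ∀ c : EuclideanSpace ℝ (Fin d), (X ∩ Metric.ball c r).Subsingleton

/-- `X` is a `t`-bonded set: uniformly discrete, full affine span, and any two
points of `X` are joined by a `t`-chain in `X`. -/
def TBonded {d : ℕ} (X : Set (EuclideanSpace ℝ (Fin d))) (t : ℝ) : Prop :=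
  UniformlyDiscrete X ∧ affineSpan ℝ X = ⊤ ∧
    ∀ x ∈ X, ∀ x' ∈ X, TChain X t x x'

/-- The `ρ`-cluster of `X` centered at `x`: points of `X` at distance at most `ρ` from `x`. -/
def cluster {d : ℕ} (X : Set (EuclideanSpace ℝ (Fin d)))
    (x : EuclideanSpace ℝ (Fin d)) (ρ : ℝ) : Set (EuclideanSpace ℝ (Fin d)) :=
  X ∩ Metric.closedBall x ρ

/-- The symmetry group `S_x(ρ)` of the cluster `C_x(ρ)`: isometries of `ℝ^d`
fixing `x` and mapping the cluster onto itself. -/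
def symmGroup {d : ℕ} (X : Set (EuclideanSpace ℝ (Fin d)))
    (x : EuclideanSpace ℝ (Fin d)) (ρ : ℝ) :
    Set (EuclideanSpace ℝ (Fin d) ≃ᵢ EuclideanSpace ℝ (Fin d)) :=
  {s | s x = x ∧ s '' cluster X x ρ = cluster X x ρ}

/-- `Sym(X)`: the isometries of `ℝ^d` mapping `X` onto `X`. -/
def SymX {d : ℕ} (X : Set (EuclideanSpace ℝ (Fin d))) :
    Set (EuclideanSpace ℝ (Fin d) ≃ᵢ EuclideanSpace ℝ (Fin d)) :=
  {g | g '' X = X}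

/-- Equivalence of the clusters `C_x(ρ)` and `C_{x'}(ρ)`: some isometry of `ℝ^d`
sends `x` to `x'` and `C_x(ρ)` onto `C_{x'}(ρ)`. -/
def ClusterEquiv {d : ℕ} (X : Set (EuclideanSpace ℝ (Fin d))) (ρ : ℝ)
    (x x' : EuclideanSpace ℝ (Fin d)) : Prop :=
  ∃ g : EuclideanSpace ℝ (Fin d) ≃ᵢ EuclideanSpace ℝ (Fin d),
    g x = x' ∧ g '' cluster X x ρ = cluster X x' ρ

/-- The rank of the cluster `C_x(ρ)`: the dimension of its affine span. -/
noncomputable def clusterRank {d : ℕ} (X : Set (EuclideanSpace ℝ (Fin d)))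
    (x : EuclideanSpace ℝ (Fin d)) (ρ : ℝ) : ℕ :=
  Module.finrank ℝ (affineSpan ℝ (cluster X x ρ)).direction

/-- If `X` is `t`-bonded and `X \ C_x(ρ)` is nonempty, there is a point
`x' ∈ C_x(ρ + t) \ C_x(ρ)` joined to `x` by a `t`-chain lying in `C_x(ρ + t)`. -/
theorem exists_point_in_shell_chain {d : ℕ} (X : Set (EuclideanSpace ℝ (Fin d)))
    (t : ℝ) (ht : 0 < t) (hX : TBonded X t)
    (x : EuclideanSpace ℝ (Fin d)) (hx : x ∈ X) (ρ : ℝ) (hρ : 0 < ρ)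
    (hne : (X \ cluster X x ρ).Nonempty) :
    ∃ x' ∈ cluster X x (ρ + t) \ cluster X x ρ,
      TChain (cluster X x (ρ + t)) t x x' := by
  classical
  obtain ⟨y, hyX, hy⟩ := hne
  obtain ⟨m, c, h0, hm, hc, hd⟩ := hX.2.2 x hx y hyX
  have hex : ∃ k, ρ < dist (c k) x := by
    refine ⟨m, ?_⟩
    rw [hm]
    by_contra h
    exact hy ⟨hyX, Metric.mem_closedBall.2 (not_lt.1 h)⟩
  have hk := Nat.find_spec hex
  have hmin : ∀ i < Nat.find hex, dist (c i) x ≤ ρ :=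
    fun i hi => not_lt.1 (Nat.find_min hex hi)
  have hkm : Nat.find hex ≤ m := by
    apply Nat.find_min'
    rw [hm]
    by_contra h
    exact hy ⟨hyX, Metric.mem_closedBall.2 (not_lt.1 h)⟩
  generalize Nat.find hex = k at hk hmin hkm
  have hle : dist (c k) x ≤ ρ + t := by
    cases k with
    | zero => rw [h0, dist_self]; linarith
    | succ j =>
      have h1 := hmin j (Nat.lt_succ_self j)
      have h2 := hd j (by omega)
      have h3 := dist_triangle (c (j + 1)) (c j) x
      rw [dist_comm (c (j + 1)) (c j)] at h3
      linarith
  refine ⟨c k, ⟨⟨hc k hkm, Metric.mem_closedBall.2 hle⟩, fun h => ?_⟩, k, c, h0, rfl, ?_, ?_⟩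
  · exact absurd (Metric.mem_closedBall.1 h.2) (not_le.2 hk)
  · intro i hi
    refine ⟨hc i (hi.trans hkm), Metric.mem_closedBall.2 ?_⟩
    rcases hi.lt_or_eq with h | h
    · linarith [hmin i h]
    · rw [h]; exact hle
  · intro i hi
    exact hd i (by omega)
end

section
/- Let X ⊆ ℝ^d be a t-bonded set, ρ > 0, and let x, x' ∈ X be two points with dist(x, x') ≤ t such that dim aff C_x(ρ) = dim aff C_x(ρ + t) and dim aff C_{x'}(ρ) = dim aff C_{x'}(ρ + t). Then the four affine spans coincide: aff C_x(ρ) = aff C_x(ρ + t) = aff C_{x'}(ρ) = aff C_{x'}(ρ + t). -/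
open Metric

/-- If `x, x' ∈ X` with `dist x x' ≤ t` and the cluster ranks stabilize
from `ρ` to `ρ + t` at both points, then all four affine spans coincide. -/
theorem affineSpan_cluster_eq_of_rank_stable {d : ℕ}
    (X : Set (EuclideanSpace ℝ (Fin d))) (t : ℝ) (ht : 0 < t) (hX : TBonded X t)
    (ρ : ℝ) (hρ : 0 < ρ) (x x' : EuclideanSpace ℝ (Fin d))
    (hx : x ∈ X) (hx' : x' ∈ X) (hdist : dist x x' ≤ t)
    (h1 : clusterRank X x ρ = clusterRank X x (ρ + t))
    (h2 : clusterRank X x' ρ = clusterRank X x' (ρ + t)) :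
    affineSpan ℝ (cluster X x ρ) = affineSpan ℝ (cluster X x (ρ + t)) ∧
    affineSpan ℝ (cluster X x ρ) = affineSpan ℝ (cluster X x' ρ) ∧
    affineSpan ℝ (cluster X x' ρ) = affineSpan ℝ (cluster X x' (ρ + t)) := by
  have key : ∀ y ∈ X, clusterRank X y ρ = clusterRank X y (ρ + t) →
      affineSpan ℝ (cluster X y ρ) = affineSpan ℝ (cluster X y (ρ + t)) := by
    intro y hy h
    have hle : affineSpan ℝ (cluster X y ρ) ≤ affineSpan ℝ (cluster X y (ρ + t)) :=
      affineSpan_mono ℝ (Set.inter_subset_inter_right _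
        (Metric.closedBall_subset_closedBall (by linarith)))
    have hm : y ∈ affineSpan ℝ (cluster X y ρ) :=
      subset_affineSpan ℝ _ ⟨hy, Metric.mem_closedBall_self hρ.le⟩
    exact AffineSubspace.eq_of_direction_eq_of_nonempty_of_le
      (Submodule.eq_of_le_of_finrank_eq (AffineSubspace.direction_le hle) h) ⟨y, hm⟩ hle
  have sub : ∀ y y', dist y y' ≤ t →
      affineSpan ℝ (cluster X y ρ) ≤ affineSpan ℝ (cluster X y' (ρ + t)) := by
    intro y y' h
    exact affineSpan_mono ℝ (Set.inter_subset_inter_right _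
      (Metric.closedBall_subset_closedBall' (by linarith)))
  have e1 := key x hx h1
  have e2 := key x' hx' h2
  refine ⟨e1, le_antisymm ?_ ?_, e2⟩
  · exact (sub x x' hdist).trans e2.ge
  · exact (sub x' x (by rwa [dist_comm])).trans e1.ge
end

section
/- Let X ⊆ ℝ^d be a t-bonded set and suppose there exists ρ > 0 such that for every point x ∈ X one has dim aff C_x(ρ) = dim aff C_x(ρ + t). Then for every x ∈ X, aff C_x(ρ) = ℝ^d; in particular dim aff C_x(ρ) = d for all x ∈ X. -/
open Metric

theorem cluster_span_step {d : ℕ}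
    (X : Set (EuclideanSpace ℝ (Fin d))) (t : ℝ) (ht : 0 < t)
    (ρ : ℝ) (hρ : 0 < ρ)
    (h : ∀ x ∈ X, clusterRank X x ρ = clusterRank X x (ρ + t))
    (x y : EuclideanSpace ℝ (Fin d)) (hx : x ∈ X) (hxy : dist x y ≤ t) :
    affineSpan ℝ (cluster X y ρ) ≤ affineSpan ℝ (cluster X x ρ) := by
  have hle : affineSpan ℝ (cluster X x ρ) ≤ affineSpan ℝ (cluster X x (ρ + t)) := by
    apply affineSpan_mono
    exact Set.inter_subset_inter_right _ (Metric.closedBall_subset_closedBall (by linarith))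
  have hmem : x ∈ affineSpan ℝ (cluster X x ρ) :=
    subset_affineSpan ℝ _ ⟨hx, Metric.mem_closedBall_self hρ.le⟩
  have hdir := Submodule.eq_of_le_of_finrank_eq (AffineSubspace.direction_le hle) (h x hx)
  have heq : affineSpan ℝ (cluster X x ρ) = affineSpan ℝ (cluster X x (ρ + t)) :=
    AffineSubspace.ext_of_direction_eq hdir ⟨x, hmem, hle hmem⟩
  rw [heq]
  apply affineSpan_mono
  refine Set.inter_subset_inter_right _ (Metric.closedBall_subset_closedBall' ?_)
  rw [dist_comm y x]
  linarith

/-- If for some `ρ > 0` the rank of every cluster stabilizes from `ρ`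
to `ρ + t`, then every `ρ`-cluster has full affine span `ℝ^d`, in particular rank `d`. -/
theorem affineSpan_cluster_eq_top_of_rank_stable {d : ℕ}
    (X : Set (EuclideanSpace ℝ (Fin d))) (t : ℝ) (ht : 0 < t) (hX : TBonded X t)
    (ρ : ℝ) (hρ : 0 < ρ)
    (h : ∀ x ∈ X, clusterRank X x ρ = clusterRank X x (ρ + t)) :
    ∀ x ∈ X, affineSpan ℝ (cluster X x ρ) = ⊤ ∧ clusterRank X x ρ = d := by
  intro x hx
  have htop : affineSpan ℝ (cluster X x ρ) = ⊤ := by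
    rw [eq_top_iff, ← hX.2.1]
    apply affineSpan_le_of_subset_coe
    intro y hy
    obtain ⟨m, c, h0, hm, hc, hd⟩ := hX.2.2 x hx y hy
    have key : ∀ i ≤ m, affineSpan ℝ (cluster X (c i) ρ) ≤ affineSpan ℝ (cluster X x ρ) := by
      intro i
      induction i with
      | zero => intro _; rw [h0]
      | succ k ih =>
        intro hk
        exact (cluster_span_step X t ht ρ hρ h (c k) (c (k + 1)) (hc k (by omega))
          (hd k (by omega))).trans (ih (by omega))
    have hk := key m le_rfl
    rw [hm] at hk
    exact hk (subset_affineSpan ℝ _ ⟨hy, Metric.mem_closedBall_self hρ.le⟩)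
  refine ⟨htop, ?_⟩
  unfold clusterRank
  rw [htop, AffineSubspace.direction_top, finrank_top, finrank_euclideanSpace_fin]
end

section
/- Let X ⊆ ℝ^d be a t-bonded set such that for every ρ with 0 < ρ ≤ t·(d − 1) the rank dim aff C_x(ρ) is the same for all points x ∈ X. Then for every ρ' ≥ d·t and every x ∈ X, dim aff C_x(ρ') = d. -/
open Metric

theorem aux_chain {d : ℕ} {X : Set (EuclideanSpace ℝ (Fin d))} {t : ℝ} (hX : TBonded X t)
    (P : EuclideanSpace ℝ (Fin d) → Prop)
    (hP : ∀ y ∈ X, ∀ z ∈ X, dist y z ≤ t → P y → P z) {x : EuclideanSpace ℝ (Fin d)}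
    (hx : x ∈ X) (hPx : P x) : ∀ z ∈ X, P z := by
  intro z hz
  obtain ⟨m, c, h0, hm, hc, hd⟩ := hX.2.2 x hx z hz
  have key : ∀ i, i ≤ m → P (c i) := by
    intro i
    induction i with
    | zero => intro _; rw [h0]; exact hPx
    | succ i ih =>
      intro hi
      exact hP _ (hc i (by omega)) _ (hc _ hi) (hd i (by omega)) (ih (by omega))
  rw [← hm]; exact key m le_rfl

theorem aux_span {d : ℕ} {S T : Set (EuclideanSpace ℝ (Fin d))} (hST : S ⊆ T) (hS : S.Nonempty)
    (hr : Module.finrank ℝ (affineSpan ℝ T).direction ≤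
      Module.finrank ℝ (affineSpan ℝ S).direction) :
    affineSpan ℝ S = affineSpan ℝ T := by
  have hle := affineSpan_mono ℝ hST
  refine AffineSubspace.eq_of_direction_eq_of_nonempty_of_le ?_ ?_ hle
  · exact Submodule.eq_of_le_of_finrank_le (AffineSubspace.direction_le hle) hr
  · exact (affineSpan_nonempty ℝ).2 hS

theorem aux_full {d : ℕ} {X : Set (EuclideanSpace ℝ (Fin d))} {t : ℝ} (hX : TBonded X t)
    (A : AffineSubspace ℝ (EuclideanSpace ℝ (Fin d))) (hA : ∀ z ∈ X, z ∈ A)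
    (hr : Module.finrank ℝ A.direction < d) : False := by
  have h1 : affineSpan ℝ X ≤ A := affineSpan_le.2 hA
  rw [hX.2.1] at h1
  rw [top_le_iff.1 h1, AffineSubspace.direction_top, finrank_top, finrank_euclideanSpace_fin] at hr
  exact lt_irrefl _ hr

theorem aux_mono {d : ℕ} (X : Set (EuclideanSpace ℝ (Fin d))) (x : EuclideanSpace ℝ (Fin d))
    {a b : ℝ} (hab : a ≤ b) : clusterRank X x a ≤ clusterRank X x b := by
  apply Submodule.finrank_mono
  apply AffineSubspace.direction_le
  apply affineSpan_mono
  exact Set.inter_subset_inter_right _ (closedBall_subset_closedBall hab)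

theorem aux_unif {d : ℕ} {X : Set (EuclideanSpace ℝ (Fin d))} {t : ℝ} (hX : TBonded X t)
    {ρ : ℝ} (hρ : 0 ≤ ρ) {n : ℕ} (hn : n < d) (hr : ∀ z ∈ X, clusterRank X z ρ = n)
    (hQ : ∀ y ∈ X, ∀ z ∈ X, dist y z ≤ t → y ≠ z → ∃ Q : Set (EuclideanSpace ℝ (Fin d)),
      Q ⊆ cluster X y ρ ∧ Q ⊆ cluster X z ρ ∧ Q.Nonempty ∧
      n ≤ Module.finrank ℝ (affineSpan ℝ Q).direction)
    {x : EuclideanSpace ℝ (Fin d)} (hx : x ∈ X) : False := by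
  have key := aux_chain hX (fun z => affineSpan ℝ (cluster X z ρ) = affineSpan ℝ (cluster X x ρ))
    (by
      intro y hy z hz hyz h1
      by_cases hne : y = z
      · rw [← hne]; exact h1
      obtain ⟨Q, q1, q2, q3, q4⟩ := hQ y hy z hz hyz hne
      have e1 := aux_span q1 q3 ((hr y hy).le.trans q4)
      have e2 := aux_span q2 q3 ((hr z hz).le.trans q4)
      show affineSpan ℝ (cluster X z ρ) = _
      rw [← e2, e1, h1]) hx rfl
  refine aux_full hX (affineSpan ℝ (cluster X x ρ)) ?_ ((hr x hx).trans_lt hn)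
  intro z hz
  rw [← key z hz]
  exact subset_affineSpan ℝ _ ⟨hz, mem_closedBall_self hρ⟩

theorem aux_pair {d : ℕ} {y z : EuclideanSpace ℝ (Fin d)} (hne : y ≠ z)
    {Q : Set (EuclideanSpace ℝ (Fin d))} (hy : y ∈ Q) (hz : z ∈ Q) :
    1 ≤ Module.finrank ℝ (affineSpan ℝ Q).direction := by
  rw [Nat.one_le_iff_ne_zero]
  intro h0
  rw [Submodule.finrank_eq_zero] at h0
  have := AffineSubspace.vsub_mem_direction (subset_affineSpan ℝ Q hy) (subset_affineSpan ℝ Q hz)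
  rw [h0, Submodule.mem_bot, vsub_eq_zero_iff_eq] at this
  exact hne this

theorem aux_one {d : ℕ} {X : Set (EuclideanSpace ℝ (Fin d))} {t : ℝ} (ht : 0 < t)
    (hX : TBonded X t) (hd : 0 < d) {x : EuclideanSpace ℝ (Fin d)} (hx : x ∈ X) :
    1 ≤ clusterRank X x t := by
  by_contra hlt
  have key := aux_chain hX (fun z => z = x) (by
    rintro y hy z hz hyz rfl
    by_contra hne
    apply hlt
    exact aux_pair (Q := cluster X y t) hne ⟨hz, by rwa [mem_closedBall, dist_comm]⟩
      ⟨hy, mem_closedBall_self ht.le⟩) hx rfl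
  refine aux_full hX (affineSpan ℝ (cluster X x t)) ?_ (?_ : clusterRank X x t < d)
  · intro z hz
    rw [key z hz]
    exact subset_affineSpan ℝ _ ⟨hx, mem_closedBall_self ht.le⟩
  · omega

theorem aux_ind {d : ℕ} {X : Set (EuclideanSpace ℝ (Fin d))} {t : ℝ} (ht : 0 < t)
    (hX : TBonded X t)
    (h : ∀ ρ : ℝ, 0 < ρ → ρ ≤ t * ((d : ℝ) - 1) →
      ∀ x ∈ X, ∀ x' ∈ X, clusterRank X x ρ = clusterRank X x' ρ) (k : ℕ) :
    k + 2 ≤ d → ∀ x ∈ X, k + 2 ≤ clusterRank X x (((k : ℝ) + 1) * t) := by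
  induction k with
  | zero =>
    intro hd x hx
    have hd' : (2 : ℝ) ≤ d := by exact_mod_cast hd
    have h1 := aux_one ht hX (by omega) hx
    simp only [Nat.cast_zero, zero_add, one_mul]
    by_contra hlt
    refine aux_unif hX ht.le (n := 1) (by omega) (fun z hz => ?_) ?_ hx
    · rw [h t ht (by nlinarith) z hz x hx]; omega
    · intro y hy z hz hyz hne
      refine ⟨{y, z}, ?_, ?_, ⟨y, by simp⟩, aux_pair hne (by simp) (by simp)⟩
      · rintro w (rfl | rfl)
        · exact ⟨hy, mem_closedBall_self ht.le⟩
        · exact ⟨hz, by rwa [mem_closedBall, dist_comm]⟩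
      · rintro w (rfl | rfl)
        · exact ⟨hy, by rwa [mem_closedBall]⟩
        · exact ⟨hz, mem_closedBall_self ht.le⟩
  | succ k ih =>
    intro hd x hx
    have hd' : (k : ℝ) + 1 + 2 ≤ d := by exact_mod_cast hd
    have ih := ih (by omega)
    have hk : (0 : ℝ) ≤ k := k.cast_nonneg
    push_cast
    by_contra hlt
    have hle : ((k : ℝ) + 1) * t ≤ (k + 1 + 1) * t := by nlinarith
    have hpos : 0 < ((k : ℝ) + 1 + 1) * t := by positivity
    have h1 := (ih x hx).trans (aux_mono X x hle)
    refine aux_unif hX hpos.le (n := k + 2) (by omega) (fun z hz => ?_) ?_ hx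
    · rw [h _ hpos (by nlinarith) z hz x hx]; omega
    · intro y hy z hz hyz hne
      refine ⟨cluster X z (((k : ℝ) + 1) * t), ?_, ?_, ⟨z, hz, mem_closedBall_self (by positivity)⟩,
        ih z hz⟩
      · refine Set.inter_subset_inter_right _ (closedBall_subset_closedBall' ?_)
        rw [dist_comm]; linarith
      · exact Set.inter_subset_inter_right _ (closedBall_subset_closedBall hle)

/-- If for every `ρ` with `0 < ρ ≤ t (d - 1)` all `ρ`-clusters of `X`
have the same rank, then every cluster of radius `ρ' ≥ d t` has rank `d`. -/
theorem clusterRank_eq_dim_of_equal_ranks {d : ℕ}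
    (X : Set (EuclideanSpace ℝ (Fin d))) (t : ℝ) (ht : 0 < t) (hX : TBonded X t)
    (h : ∀ ρ : ℝ, 0 < ρ → ρ ≤ t * ((d : ℝ) - 1) →
      ∀ x ∈ X, ∀ x' ∈ X, clusterRank X x ρ = clusterRank X x' ρ) :
    ∀ ρ' : ℝ, (d : ℝ) * t ≤ ρ' → ∀ x ∈ X, clusterRank X x ρ' = d := by
  intro ρ' hρ x hx
  apply le_antisymm
  · exact (Submodule.finrank_le _).trans finrank_euclideanSpace_fin.le
  rcases d with _ | _ | k
  · exact Nat.zero_le _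
  · refine (aux_one ht hX (by omega) hx).trans (aux_mono X x ?_)
    simpa using hρ
  · refine (aux_ind ht hX h k le_rfl x hx).trans (aux_mono X x ?_)
    push_cast at hρ
    nlinarith
end

section
/- Let t > 0 and let X ⊆ ℝ^d be a set with at least two points such that any two points of X are joined by a t-chain in X, and suppose that for every x ∈ X the cluster C_x(t) is contained in a line (i.e., dim aff C_x(t) ≤ 1). Then all points of X lie on a single line. -/
open Metric

/-- If `X` has at least two points, any two points of `X` are joined
by a `t`-chain in `X`, and every `t`-cluster of `X` is contained in a line, then
all of `X` lies on a single line. -/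
theorem collinear_of_clusters_collinear {d : ℕ}
    (X : Set (EuclideanSpace ℝ (Fin d))) (t : ℝ) (ht : 0 < t)
    (hnt : X.Nontrivial)
    (hchain : ∀ x ∈ X, ∀ x' ∈ X, TChain X t x x')
    (hcol : ∀ x ∈ X, Collinear ℝ (cluster X x t)) :
    Collinear ℝ X := by
  obtain ⟨a, ha, b', hb', hab'⟩ := hnt
  obtain ⟨b, hb, hba, hdb⟩ : ∃ b ∈ X, b ≠ a ∧ dist b a ≤ t := by
    by_contra! hno
    obtain ⟨m, c, h0, hm, hX, hd⟩ := hchain a ha b' hb'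
    have key : ∀ i, i ≤ m → c i = a := by
      intro i
      induction i with
      | zero => intro _; exact h0
      | succ k ih =>
        intro hk
        by_contra hne
        have h1 := hno _ (hX _ hk) hne
        have h2 := hd k (by omega)
        rw [ih (by omega), dist_comm] at h2
        linarith
    exact hab' ((key m le_rfl).symm.trans hm)
  have hsub : X ⊆ (line[ℝ, a, b] : Set (EuclideanSpace ℝ (Fin d))) := by
    intro x hx
    obtain ⟨m, c, h0, hm, hX, hd⟩ := hchain a ha x hx
    have key : ∀ i, i ≤ m → c i ∈ line[ℝ, a, b] ∧
        ∃ y ∈ X, y ∈ line[ℝ, a, b] ∧ y ≠ c i ∧ dist y (c i) ≤ t := by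
      intro i
      induction i with
      | zero =>
        intro _
        rw [h0]
        exact ⟨left_mem_affineSpan_pair ℝ a b, b, hb, right_mem_affineSpan_pair ℝ a b, hba, hdb⟩
      | succ k ih =>
        intro hk
        obtain ⟨hc, y, hyX, hyL, hyne, hyd⟩ := ih (by omega)
        have h2 := hd k (by omega)
        by_cases hne : c (k + 1) = c k
        · rw [hne]
          exact ⟨hc, y, hyX, hyL, hyne, hyd⟩
        · have hk' : c k ∈ X := hX k (by omega)
          have hmem : c (k + 1) ∈ line[ℝ, c k, y] := by
            refine (hcol (c k) hk').mem_affineSpan_of_mem_of_ne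
              ⟨hk', mem_closedBall_self ht.le⟩ ⟨hyX, hyd⟩ ⟨hX _ hk, ?_⟩ hyne.symm
            rw [mem_closedBall, dist_comm]
            exact h2
          exact ⟨affineSpan_pair_le_of_mem_of_mem hc hyL hmem, c k, hk', hc, Ne.symm hne, h2⟩
    rw [← hm]
    exact (key m le_rfl).1
  have h : Collinear ℝ (line[ℝ, a, b] : Set (EuclideanSpace ℝ (Fin d))) := by
    have := collinear_pair ℝ a b
    rw [Collinear, ← direction_affineSpan] at this ⊢
    rwa [AffineSubspace.affineSpan_coe]
  exact h.subset hsub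
end

section
/- Let X ⊆ ℝ^d be uniformly discrete, x ∈ X, and ρ > 0. The symmetry group S_x(ρ) of the cluster C_x(ρ) is finite if and only if dim aff C_x(ρ) ≥ d − 1, i.e., if and only if aff C_x(ρ) = ℝ^d or aff C_x(ρ) is a hyperplane (a (d−1)-dimensional affine subspace). -/
open Metric

lemma cluster_finite_aux {d : ℕ}
    (X : Set (EuclideanSpace ℝ (Fin d))) (hX : UniformlyDiscrete X)
    (x : EuclideanSpace ℝ (Fin d)) (ρ : ℝ) : (cluster X x ρ).Finite := by
  obtain ⟨r, hr, h⟩ := hX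
  obtain ⟨t, -, ht, hc⟩ := (isCompact_closedBall x ρ).finite_cover_balls hr
  refine (ht.biUnion (fun c _ => (h c).finite)).subset ?_
  rintro y ⟨hy, hy'⟩
  have := hc hy'
  simp only [Set.mem_iUnion] at this ⊢
  obtain ⟨c, hct, hyc⟩ := this
  exact ⟨c, hct, hy, hyc⟩

lemma clusterRank_aux {d : ℕ}
    (X : Set (EuclideanSpace ℝ (Fin d)))
    (x : EuclideanSpace ℝ (Fin d)) (hx : x ∈ X) (ρ : ℝ) (hρ : 0 < ρ) :
    clusterRank X x ρ =
      Module.finrank ℝ (Submodule.span ℝ ((fun y => y - x) '' cluster X x ρ)) := by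
  have hxc : x ∈ cluster X x ρ := ⟨hx, by simp [hρ.le]⟩
  rw [clusterRank, direction_affineSpan, vectorSpan_eq_span_vsub_set_right ℝ hxc]
  rfl

lemma exists_linear_aux {d : ℕ} (s : EuclideanSpace ℝ (Fin d) ≃ᵢ EuclideanSpace ℝ (Fin d))
    (x : EuclideanSpace ℝ (Fin d)) (h : s x = x) :
    ∃ L : EuclideanSpace ℝ (Fin d) ≃ₗᵢ[ℝ] EuclideanSpace ℝ (Fin d),
      ∀ y, s y = L (y - x) + x := by
  refine ⟨s.toRealAffineIsometryEquiv.linearIsometryEquiv, fun y => ?_⟩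
  have := s.toRealAffineIsometryEquiv.map_vadd x (y - x)
  simpa [h] using this

lemma finite_aux {d : ℕ}
    (X : Set (EuclideanSpace ℝ (Fin d))) (hX : UniformlyDiscrete X)
    (x : EuclideanSpace ℝ (Fin d)) (ρ : ℝ)
    (v : EuclideanSpace ℝ (Fin d))
    (hvW : v ∈ (Submodule.span ℝ ((fun y => y - x) '' cluster X x ρ))ᗮ)
    (hv : ∀ w ∈ (Submodule.span ℝ ((fun y => y - x) '' cluster X x ρ))ᗮ, ∃ c : ℝ, c • v = w) :
    (symmGroup X x ρ).Finite := by
  set W := Submodule.span ℝ ((fun y => y - x) '' cluster X x ρ) with hW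
  have hfin := cluster_finite_aux X hX x ρ
  have : Finite (cluster X x ρ) := hfin
  let F : (EuclideanSpace ℝ (Fin d) ≃ᵢ EuclideanSpace ℝ (Fin d)) →
      (cluster X x ρ → EuclideanSpace ℝ (Fin d)) × EuclideanSpace ℝ (Fin d) :=
    fun s => (fun c => s c, s (x + v))
  have hT : ((Set.univ.pi fun _ : cluster X x ρ => cluster X x ρ) ×ˢ
      ({x + v, x - v} : Set (EuclideanSpace ℝ (Fin d)))).Finite :=
    (Set.Finite.pi fun _ => hfin).prod (by simp)
  refine Set.Finite.of_finite_image (f := F) (hT.subset ?_) ?_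
  · rintro _ ⟨s, ⟨hsx, hs⟩, rfl⟩
    obtain ⟨L, hL⟩ := exists_linear_aux s x hsx
    refine ⟨fun c _ => ?_, ?_⟩
    · change s c ∈ cluster X x ρ
      exact hs.subset ⟨c, c.2, rfl⟩
    · have hLv : L v ∈ Wᗮ := by
        rw [Submodule.mem_orthogonal]
        intro u hu
        induction hu using Submodule.span_induction with
        | mem u hu =>
          obtain ⟨c, hc, rfl⟩ := hu
          rw [← hs] at hc
          obtain ⟨c', hc', rfl⟩ := hc
          simp only [hL, add_sub_cancel_right, L.inner_map_map]
          exact (Submodule.mem_orthogonal _ _).1 hvW _ (Submodule.subset_span ⟨c', hc', rfl⟩)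
        | zero => simp
        | add a b _ _ ha hb => rw [inner_add_left, ha, hb, add_zero]
        | smul a b _ hb => rw [inner_smul_left, hb, mul_zero]
      obtain ⟨c, hc⟩ := hv _ hLv
      have hn : ‖c • v‖ = ‖v‖ := by rw [hc, L.norm_map]
      change s (x + v) ∈ _
      rw [hL, add_sub_cancel_left, ← hc]
      rw [norm_smul] at hn
      by_cases h0 : v = 0
      · simp [h0]
      have h1 : |c| = 1 := by
        have : ‖v‖ ≠ 0 := norm_ne_zero_iff.2 h0
        exact mul_right_cancel₀ this (by rw [one_mul]; exact hn)
      rcases eq_or_eq_neg_of_abs_eq h1 with rfl | rfl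
      · left; rw [one_smul, add_comm]
      · right; simp [sub_eq_add_neg, add_comm]
  · rintro s ⟨hsx, hs⟩ t ⟨htx, ht⟩ hst
    obtain ⟨L, hL⟩ := exists_linear_aux s x hsx
    obtain ⟨M, hM⟩ := exists_linear_aux t x htx
    have h1 : ∀ c ∈ cluster X x ρ, s c = t c := fun c hc => congrFun (congrArg Prod.fst hst) ⟨c, hc⟩
    have h2 : s (x + v) = t (x + v) := congrArg Prod.snd hst
    have hWe : ∀ w ∈ W, L w = M w := by
      intro w hw
      induction hw using Submodule.span_induction with
      | mem u hu =>
        obtain ⟨c, hc, rfl⟩ := hu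
        have := h1 c hc
        rw [hL, hM] at this
        exact add_right_cancel this
      | zero => simp
      | add a b _ _ ha hb => rw [map_add, map_add, ha, hb]
      | smul a b _ hb => rw [map_smul, map_smul, hb]
    have hve : L v = M v := by
      rw [hL, hM, add_sub_cancel_left] at h2
      exact add_right_cancel h2
    ext1 y
    rw [hL, hM]
    congr 1
    obtain ⟨a, ha, b, hb, hab⟩ := W.exists_add_mem_mem_orthogonal (y - x)
    obtain ⟨c, rfl⟩ := hv b hb
    rw [hab, map_add, map_add, map_smul, map_smul, hve, hWe a ha]

lemma infinite_aux {d : ℕ}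
    (X : Set (EuclideanSpace ℝ (Fin d)))
    (x : EuclideanSpace ℝ (Fin d)) (ρ : ℝ)
    (a b : EuclideanSpace ℝ (Fin d))
    (ha : ∀ c ∈ cluster X x ρ, inner ℝ a (c - x) = 0)
    (hb : ∀ c ∈ cluster X x ρ, inner ℝ b (c - x) = 0)
    (hab : LinearIndependent ℝ ![a, b]) :
    (symmGroup X x ρ).Infinite := by
  let R : ℝ → (EuclideanSpace ℝ (Fin d) ≃ₗᵢ[ℝ] EuclideanSpace ℝ (Fin d)) :=
    fun t => (Submodule.span ℝ {a + t • b})ᗮ.reflection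
  let s : ℝ → (EuclideanSpace ℝ (Fin d) ≃ᵢ EuclideanSpace ℝ (Fin d)) :=
    fun t => ((IsometryEquiv.subRight x).trans (R t).toIsometryEquiv).trans
      (IsometryEquiv.addRight x)
  have hs : ∀ t y, s t y = R t (y - x) + x := fun t y => rfl
  refine Set.infinite_of_injective_forall_mem (f := s) ?_ ?_
  · intro t u htu
    have h1 : R t (a + t • b) = R u (a + t • b) := by
      have := congrArg (fun f => f (a + t • b + x)) htu
      simpa [hs] using this
    have h2 : a + t • b ∈ Submodule.span ℝ {a + u • b} := by
      simp only [R, Submodule.reflection_orthogonal_apply, neg_inj] at h1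
      rw [← Submodule.reflection_eq_self_iff, ← h1, Submodule.reflection_eq_self_iff]
      exact Submodule.mem_span_singleton_self _
    obtain ⟨k, hk⟩ := Submodule.mem_span_singleton.1 h2
    have h3 := LinearIndependent.pair_iff.1 hab (k - 1) (k * u - t) (by
      have : (k - 1) • a + (k * u - t) • b = k • (a + u • b) - (a + t • b) := by module
      rw [this, hk, sub_self])
    have : k = 1 := by linarith [h3.1]
    subst this
    linarith [h3.2]
  · intro t
    have hfix : ∀ c ∈ cluster X x ρ, s t c = c := by
      intro c hc
      rw [hs]
      have : R t (c - x) = c - x := by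
        rw [Submodule.reflection_eq_self_iff, Submodule.mem_orthogonal_singleton_iff_inner_right,
          inner_add_left, inner_smul_left, ha c hc, hb c hc]
        simp
      rw [this, sub_add_cancel]
    refine ⟨by simp [hs], ?_⟩
    rw [Set.image_congr hfix, Set.image_id']

/-- The symmetry group `S_x(ρ)` of a cluster of a uniformly discrete
set is finite if and only if the rank of the cluster is at least `d - 1`. -/
theorem symmGroup_finite_iff_rank_ge {d : ℕ}
    (X : Set (EuclideanSpace ℝ (Fin d))) (hX : UniformlyDiscrete X)
    (x : EuclideanSpace ℝ (Fin d)) (hx : x ∈ X) (ρ : ℝ) (hρ : 0 < ρ) :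
    (symmGroup X x ρ).Finite ↔ d - 1 ≤ clusterRank X x ρ := by
  rw [clusterRank_aux X x hx ρ hρ]
  have hsum := (Submodule.span ℝ ((fun y => y - x) '' cluster X x ρ)).finrank_add_finrank_orthogonal
  rw [finrank_euclideanSpace_fin] at hsum
  constructor
  · intro hf
    by_contra! hlt
    have h1 : 1 < Module.finrank ℝ
        ((Submodule.span ℝ ((fun y => y - x) '' cluster X x ρ))ᗮ : Submodule ℝ _) := by omega
    obtain ⟨a, ha⟩ := Module.finrank_pos_iff_exists_ne_zero.1 (zero_lt_one.trans h1)
    obtain ⟨b, hb⟩ := exists_linearIndependent_pair_of_one_lt_finrank h1 ha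
    refine infinite_aux X x ρ a b (fun c hc => ?_) (fun c hc => ?_) ?_ hf
    · exact (Submodule.mem_orthogonal' _ _).1 a.2 _ (Submodule.subset_span ⟨c, hc, rfl⟩)
    · exact (Submodule.mem_orthogonal' _ _).1 b.2 _ (Submodule.subset_span ⟨c, hc, rfl⟩)
    · rw [LinearIndependent.pair_iff] at hb ⊢
      intro p q hpq
      exact hb p q (Subtype.ext (by simpa using hpq))
  · intro h
    obtain ⟨v, hv⟩ := (finrank_le_one_iff (K := ℝ)
      (V := ((Submodule.span ℝ ((fun y => y - x) '' cluster X x ρ))ᗮ : Submodule ℝ _))).1 (by omega)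
    refine finite_aux X hX x ρ v v.2 (fun w hw => ?_)
    obtain ⟨c, hc⟩ := hv ⟨w, hw⟩
    exact ⟨c, congrArg Subtype.val hc⟩
end

section
/- (t-extension theorem) Let X ⊆ ℝ^d be a t-bonded set, ρ₀ > 0, and let x, x' ∈ X be such that the clusters C_x(ρ₀ + t) and C_{x'}(ρ₀ + t) are equivalent and S_x(ρ₀) = S_x(ρ₀ + t). Then every isometry g of ℝ^d with g(x) = x' and g(C_x(ρ₀)) = C_{x'}(ρ₀) also satisfies g(C_x(ρ₀ + t)) = C_{x'}(ρ₀ + t). -/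
open Metric

/-- t-extension theorem: If `C_x(ρ₀ + t)` and `C_{x'}(ρ₀ + t)` are
equivalent and `S_x(ρ₀) = S_x(ρ₀ + t)`, then every isometry sending `x` to `x'` and
`C_x(ρ₀)` onto `C_{x'}(ρ₀)` also sends `C_x(ρ₀ + t)` onto `C_{x'}(ρ₀ + t)`. -/
theorem t_extension {d : ℕ}
    (X : Set (EuclideanSpace ℝ (Fin d))) (t : ℝ) (ht : 0 < t) (hX : TBonded X t)
    (ρ₀ : ℝ) (hρ₀ : 0 < ρ₀) (x x' : EuclideanSpace ℝ (Fin d))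
    (hx : x ∈ X) (hx' : x' ∈ X)
    (hequiv : ClusterEquiv X (ρ₀ + t) x x')
    (hS : symmGroup X x ρ₀ = symmGroup X x (ρ₀ + t)) :
    ∀ g : EuclideanSpace ℝ (Fin d) ≃ᵢ EuclideanSpace ℝ (Fin d),
      g x = x' → g '' cluster X x ρ₀ = cluster X x' ρ₀ →
      g '' cluster X x (ρ₀ + t) = cluster X x' (ρ₀ + t) := by
  intro g hgx hg
  obtain ⟨h, hhx, hh⟩ := hequiv
  have hsub : h '' cluster X x ρ₀ = cluster X x' ρ₀ := by
    have e1 : cluster X x ρ₀ = cluster X x (ρ₀ + t) ∩ Metric.closedBall x ρ₀ := by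
      ext y
      simp only [cluster, Set.mem_inter_iff, Metric.mem_closedBall]
      constructor
      · rintro ⟨a, b⟩
        exact ⟨⟨a, by linarith⟩, b⟩
      · rintro ⟨⟨a, _⟩, b⟩
        exact ⟨a, b⟩
    have e2 : cluster X x' ρ₀ = cluster X x' (ρ₀ + t) ∩ Metric.closedBall x' ρ₀ := by
      ext y
      simp only [cluster, Set.mem_inter_iff, Metric.mem_closedBall]
      constructor
      · rintro ⟨a, b⟩
        exact ⟨⟨a, by linarith⟩, b⟩
      · rintro ⟨⟨a, _⟩, b⟩
        exact ⟨a, b⟩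
    rw [e1, e2, Set.image_inter h.injective, hh, IsometryEquiv.image_closedBall, hhx]
  have key : ∀ A B : Set (EuclideanSpace ℝ (Fin d)), h '' A = B → h.symm '' B = A := by
    rintro A B rfl
    rw [← Set.image_comp]
    simp
  have ct : (⇑(g.trans h.symm) : EuclideanSpace ℝ (Fin d) → EuclideanSpace ℝ (Fin d))
      = ⇑h.symm ∘ ⇑g := rfl
  have hs : g.trans h.symm ∈ symmGroup X x ρ₀ := by
    refine ⟨?_, ?_⟩
    · simp [hgx, ← hhx]
    · rw [ct, Set.image_comp, hg]
      exact key _ _ hsub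
  rw [hS] at hs
  have h2 := hs.2
  rw [ct, Set.image_comp] at h2
  have h3 := key _ _ hh
  exact (Set.image_injective.2 h.symm.injective) (h2.trans h3.symm)
end

section
/- Let X ⊆ ℝ^d be a t-bonded set and ρ₀ > 0 such that: (1) any two points of X whose ρ₀-clusters are equivalent also have equivalent (ρ₀ + t)-clusters; (2) S_x(ρ₀) = S_x(ρ₀ + t) for every x ∈ X. Then every isometry g of ℝ^d for which there exist x, x' ∈ X with g(x) = x' and g(C_x(ρ₀ + t)) = C_{x'}(ρ₀ + t) maps X onto X, i.e., g ∈ Sym(X). -/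
open Metric

theorem cluster_image_iff {d : ℕ} (X : Set (EuclideanSpace ℝ (Fin d))) (ρ : ℝ)
    (y : EuclideanSpace ℝ (Fin d))
    (g : EuclideanSpace ℝ (Fin d) ≃ᵢ EuclideanSpace ℝ (Fin d)) :
    g '' cluster X y ρ = cluster X (g y) ρ ↔ ∀ w, dist w y ≤ ρ → (w ∈ X ↔ g w ∈ X) := by
  constructor
  · intro h w hw
    have h3 : g w ∈ g '' cluster X y ρ ↔ g w ∈ cluster X (g y) ρ := by rw [h]
    rw [g.injective.mem_set_image] at h3
    simpa [cluster, hw, g.isometry.dist_eq] using h3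
  · intro h
    ext v
    obtain ⟨w, rfl⟩ := g.surjective v
    rw [g.injective.mem_set_image]
    simp only [cluster, Set.mem_inter_iff, Metric.mem_closedBall, g.isometry.dist_eq]
    constructor
    · rintro ⟨a, b⟩
      exact ⟨(h w b).1 a, b⟩
    · rintro ⟨a, b⟩
      exact ⟨(h w b).2 a, b⟩

theorem forward_mem {d : ℕ}
    (X : Set (EuclideanSpace ℝ (Fin d))) (t : ℝ) (ht : 0 < t) (hX : TBonded X t)
    (ρ₀ : ℝ) (hρ₀ : 0 < ρ₀)
    (h1 : ∀ x ∈ X, ∀ x' ∈ X, ClusterEquiv X ρ₀ x x' → ClusterEquiv X (ρ₀ + t) x x')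
    (h2 : ∀ x ∈ X, symmGroup X x ρ₀ = symmGroup X x (ρ₀ + t))
    (g : EuclideanSpace ℝ (Fin d) ≃ᵢ EuclideanSpace ℝ (Fin d))
    (x : EuclideanSpace ℝ (Fin d)) (hx : x ∈ X)
    (hg : ∀ w, dist w x ≤ ρ₀ + t → (w ∈ X ↔ g w ∈ X)) (z : EuclideanSpace ℝ (Fin d))
    (hz : z ∈ X) : g z ∈ X := by
  have step : ∀ y ∈ X, (∀ w, dist w y ≤ ρ₀ + t → (w ∈ X ↔ g w ∈ X)) →
      ∀ z ∈ X, dist y z ≤ t → ∀ w, dist w z ≤ ρ₀ + t → (w ∈ X ↔ g w ∈ X) := by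
    intro y hy hQ z hz hyz
    have hgz : g z ∈ X := (hQ z (by rw [dist_comm]; linarith)).1 hz
    have hz0 : ∀ w, dist w z ≤ ρ₀ → (w ∈ X ↔ g w ∈ X) := fun w hw =>
      hQ w (by have := dist_triangle w z y; rw [dist_comm z y] at this; linarith)
    obtain ⟨h, hhz, hh⟩ := h1 z hz (g z) hgz ⟨g, rfl, (cluster_image_iff X ρ₀ z g).2 hz0⟩
    rw [← hhz, cluster_image_iff] at hh
    have hs : h.symm (g z) = z := by rw [← hhz]; simp
    have hsd : ∀ w, dist (h.symm (g w)) z = dist w z := by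
      intro w
      conv_lhs => rw [← hs]
      rw [h.symm.isometry.dist_eq, g.isometry.dist_eq]
    have key : ∀ w, dist w z ≤ ρ₀ + t → (h.symm (g w) ∈ X ↔ g w ∈ X) := by
      intro w hw
      have := hh (h.symm (g w)) (by rw [hsd]; exact hw)
      simpa using this
    have hmem : g.trans h.symm ∈ symmGroup X z ρ₀ := by
      refine ⟨hs, ?_⟩
      have e : (g.trans h.symm) z = z := hs
      have := (cluster_image_iff X ρ₀ z (g.trans h.symm)).2 (fun w hw =>
        (hz0 w hw).trans (key w (by linarith)).symm)
      rwa [e] at this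
    rw [h2 z hz] at hmem
    obtain ⟨e, hm⟩ := hmem
    have hm' : (g.trans h.symm) '' cluster X z (ρ₀ + t)
        = cluster X ((g.trans h.symm) z) (ρ₀ + t) := by rw [e]; exact hm
    rw [cluster_image_iff] at hm'
    intro w hw
    exact (hm' w hw).trans (key w hw)
  obtain ⟨m, c, c0, cm, cX, cd⟩ := hX.2.2 x hx z hz
  have all : ∀ i ≤ m, ∀ w, dist w (c i) ≤ ρ₀ + t → (w ∈ X ↔ g w ∈ X) := by
    intro i
    induction i with
    | zero => intro _; rw [c0]; exact hg
    | succ k ih =>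
      intro hk
      exact step (c k) (cX k (by omega)) (ih (by omega)) _ (cX _ hk) (cd k (by omega))
  exact (all m le_rfl z (by rw [cm, dist_self]; linarith)).1 hz

/-- Under the two local conditions, any isometry mapping some
`(ρ₀ + t)`-cluster of `X` onto another (with center going to center) is a symmetry
of the whole set `X`. -/
theorem isometry_mem_symX {d : ℕ}
    (X : Set (EuclideanSpace ℝ (Fin d))) (t : ℝ) (ht : 0 < t) (hX : TBonded X t)
    (ρ₀ : ℝ) (hρ₀ : 0 < ρ₀)
    (h1 : ∀ x ∈ X, ∀ x' ∈ X, ClusterEquiv X ρ₀ x x' → ClusterEquiv X (ρ₀ + t) x x')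
    (h2 : ∀ x ∈ X, symmGroup X x ρ₀ = symmGroup X x (ρ₀ + t)) :
    ∀ g : EuclideanSpace ℝ (Fin d) ≃ᵢ EuclideanSpace ℝ (Fin d),
      (∃ x ∈ X, ∃ x' ∈ X, g x = x' ∧
        g '' cluster X x (ρ₀ + t) = cluster X x' (ρ₀ + t)) →
      g ∈ SymX X := by
  rintro g ⟨x, hx, x', hx', rfl, hg⟩
  rw [cluster_image_iff] at hg
  have hg' : ∀ w, dist w (g x) ≤ ρ₀ + t → (w ∈ X ↔ g.symm w ∈ X) := by
    intro w hw
    obtain ⟨v, rfl⟩ := g.surjective w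
    rw [g.isometry.dist_eq] at hw
    simpa using (hg v hw).symm
  have hf := forward_mem X t ht hX ρ₀ hρ₀ h1 h2 g x hx hg
  have hb := forward_mem X t ht hX ρ₀ hρ₀ h1 h2 g.symm (g x) hx' hg'
  change g '' X = X
  apply Set.Subset.antisymm
  · rintro _ ⟨z, hz, rfl⟩
    exact hf z hz
  · intro z hz
    exact ⟨g.symm z, hb z hz, by simp⟩
end

section
/- Let X ⊆ ℝ^d be a t-bonded set and ρ₀ > 0 such that: (1) any two points of X whose ρ₀-clusters are equivalent also have equivalent (ρ₀ + t)-clusters; (2) S_x(ρ₀) = S_x(ρ₀ + t) for every x ∈ X. Then for any two points x, x' ∈ X whose ρ₀-clusters are equivalent there exists g ∈ Sym(X) with g(x) = x'. Consequently, the orbits of Sym(X) on X are exactly the classes of points of X with pairwise equivalent ρ₀-clusters. -/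
open Metric

theorem aux_restrict {d : ℕ}
    (X : Set (EuclideanSpace ℝ (Fin d)))  (ρ σ : ℝ) (hρ : ρ ≤ σ)
    (g : EuclideanSpace ℝ (Fin d) ≃ᵢ EuclideanSpace ℝ (Fin d))
    (x : EuclideanSpace ℝ (Fin d))
    (hg : g '' cluster X x σ = cluster X (g x) σ) :
    g '' cluster X x ρ = cluster X (g x) ρ := by
  ext w
  constructor
  · rintro ⟨z, ⟨hz, hd⟩, rfl⟩
    rw [mem_closedBall] at hd
    have : g z ∈ cluster X (g x) σ := hg ▸ ⟨z, ⟨hz, hd.trans hρ⟩, rfl⟩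
    exact ⟨this.1, by rw [mem_closedBall, g.dist_eq]; exact hd⟩
  · rintro ⟨hw, hd⟩
    rw [mem_closedBall] at hd
    have h3 : w ∈ cluster X (g x) σ := ⟨hw, hd.trans hρ⟩
    rw [← hg] at h3
    obtain ⟨z, ⟨hz, _⟩, rfl⟩ := h3
    refine ⟨z, ⟨hz, ?_⟩, rfl⟩
    rw [g.dist_eq] at hd
    exact hd

theorem aux_extend {d : ℕ}
    (X : Set (EuclideanSpace ℝ (Fin d))) (t : ℝ) (ht : 0 < t) (ρ₀ : ℝ)
    (h1 : ∀ x ∈ X, ∀ x' ∈ X, ClusterEquiv X ρ₀ x x' → ClusterEquiv X (ρ₀ + t) x x')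
    (h2 : ∀ x ∈ X, symmGroup X x ρ₀ = symmGroup X x (ρ₀ + t))
    (g : EuclideanSpace ℝ (Fin d) ≃ᵢ EuclideanSpace ℝ (Fin d))
    (x : EuclideanSpace ℝ (Fin d)) (hx : x ∈ X) (hgx : g x ∈ X)
    (hg : g '' cluster X x ρ₀ = cluster X (g x) ρ₀) :
    g '' cluster X x (ρ₀ + t) = cluster X (g x) (ρ₀ + t) := by
  obtain ⟨h, hhx, hh⟩ := h1 x hx (g x) hgx ⟨g, rfl, hg⟩
  -- the inverse of `h` composed with `g`, read on the larger cluster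
  have hs : (h.trans g.symm) ∈ symmGroup X x (ρ₀ + t) →
      g '' cluster X x (ρ₀ + t) = cluster X (g x) (ρ₀ + t) := by
    rintro ⟨_, e⟩
    have e' : g '' ((h.trans g.symm) '' cluster X x (ρ₀ + t)) = g '' cluster X x (ρ₀ + t) := by
      rw [e]
    rw [← e', ← hh, Set.image_image]
    simp
  apply hs
  rw [← h2 x hx]
  refine ⟨by simp [hhx], ?_⟩
  have hres : h '' cluster X x ρ₀ = cluster X (g x) ρ₀ := by
    rw [← hhx] at hh ⊢
    exact aux_restrict X ρ₀ (ρ₀ + t) (by linarith) h x hh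
  have : (h.trans g.symm) '' cluster X x ρ₀ = g.symm '' (h '' cluster X x ρ₀) := by
    rw [Set.image_image]; rfl
  rw [this, hres, ← hg, Set.image_image]
  simp

theorem aux_step {d : ℕ}
    (X : Set (EuclideanSpace ℝ (Fin d))) (t : ℝ) (ρ₀ : ℝ) (hρ₀ : 0 < ρ₀)
    (g : EuclideanSpace ℝ (Fin d) ≃ᵢ EuclideanSpace ℝ (Fin d))
    (x y : EuclideanSpace ℝ (Fin d)) (hy : y ∈ X) (hxy : dist x y ≤ t)
    (hg : g '' cluster X x (ρ₀ + t) = cluster X (g x) (ρ₀ + t)) :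
    g y ∈ X ∧ g '' cluster X y ρ₀ = cluster X (g y) ρ₀ := by
  have hmem : ∀ z ∈ X, dist z x ≤ ρ₀ + t → g z ∈ X := by
    intro z hz hd
    have : g z ∈ cluster X (g x) (ρ₀ + t) := hg ▸ ⟨z, ⟨hz, hd⟩, rfl⟩
    exact this.1
  refine ⟨hmem y hy (by rw [dist_comm]; linarith), ?_⟩
  ext w
  constructor
  · rintro ⟨z, ⟨hz, hd⟩, rfl⟩
    rw [mem_closedBall] at hd
    refine ⟨hmem z hz ?_, ?_⟩
    · have := dist_triangle z y x
      rw [dist_comm y x] at this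
      linarith
    · rw [mem_closedBall, g.dist_eq]; exact hd
  · rintro ⟨hw, hd⟩
    rw [mem_closedBall] at hd
    have h3 : w ∈ cluster X (g x) (ρ₀ + t) := by
      refine ⟨hw, ?_⟩
      have := dist_triangle w (g y) (g x)
      rw [g.dist_eq, dist_comm y x] at this
      rw [mem_closedBall]
      linarith
    rw [← hg] at h3
    obtain ⟨z, ⟨hz, _⟩, rfl⟩ := h3
    refine ⟨z, ⟨hz, ?_⟩, rfl⟩
    rw [g.dist_eq] at hd
    exact hd

theorem aux_maps {d : ℕ}
    (X : Set (EuclideanSpace ℝ (Fin d))) (t : ℝ) (ht : 0 < t) (hX : TBonded X t)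
    (ρ₀ : ℝ) (hρ₀ : 0 < ρ₀)
    (h1 : ∀ x ∈ X, ∀ x' ∈ X, ClusterEquiv X ρ₀ x x' → ClusterEquiv X (ρ₀ + t) x x')
    (h2 : ∀ x ∈ X, symmGroup X x ρ₀ = symmGroup X x (ρ₀ + t))
    (g : EuclideanSpace ℝ (Fin d) ≃ᵢ EuclideanSpace ℝ (Fin d))
    (x : EuclideanSpace ℝ (Fin d)) (hx : x ∈ X) (hgx : g x ∈ X)
    (hg : g '' cluster X x ρ₀ = cluster X (g x) ρ₀) : ∀ y ∈ X, g y ∈ X := by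
  intro y hy
  obtain ⟨m, c, h0, hm, hc, hd⟩ := hX.2.2 x hx y hy
  have key : ∀ i ≤ m, g (c i) ∈ X ∧ g '' cluster X (c i) ρ₀ = cluster X (g (c i)) ρ₀ := by
    intro i
    induction i with
    | zero => intro _; rw [h0]; exact ⟨hgx, hg⟩
    | succ k ih =>
      intro hk
      obtain ⟨a, b⟩ := ih (by omega)
      exact aux_step X t ρ₀ hρ₀ g (c k) (c (k+1)) (hc _ hk) (hd k (by omega))
        (aux_extend X t ht ρ₀ h1 h2 g (c k) (hc k (by omega)) a b)
  rw [← hm]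
  exact (key m le_rfl).1

/-- Under the two local conditions, points with equivalent
`ρ₀`-clusters lie in the same `Sym(X)`-orbit; consequently the `Sym(X)`-orbits on
`X` are exactly the classes of points with pairwise equivalent `ρ₀`-clusters. -/
theorem orbits_eq_cluster_classes {d : ℕ}
    (X : Set (EuclideanSpace ℝ (Fin d))) (t : ℝ) (ht : 0 < t) (hX : TBonded X t)
    (ρ₀ : ℝ) (hρ₀ : 0 < ρ₀)
    (h1 : ∀ x ∈ X, ∀ x' ∈ X, ClusterEquiv X ρ₀ x x' → ClusterEquiv X (ρ₀ + t) x x')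
    (h2 : ∀ x ∈ X, symmGroup X x ρ₀ = symmGroup X x (ρ₀ + t)) :
    (∀ x ∈ X, ∀ x' ∈ X, ClusterEquiv X ρ₀ x x' → ∃ g ∈ SymX X, g x = x') ∧
    (∀ x ∈ X, ∀ x' ∈ X, ((∃ g ∈ SymX X, g x = x') ↔ ClusterEquiv X ρ₀ x x')) := by
  have A : ∀ x ∈ X, ∀ x' ∈ X, ClusterEquiv X ρ₀ x x' → ∃ g ∈ SymX X, g x = x' := by
    rintro x hx x' hx' ⟨g, rfl, hg⟩
    refine ⟨g, ?_, rfl⟩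
    have B := aux_maps X t ht hX ρ₀ hρ₀ h1 h2 g x hx hx' hg
    have C := aux_maps X t ht hX ρ₀ hρ₀ h1 h2 g.symm (g x) hx' (by simpa using hx)
      (by rw [← hg, Set.image_image]; simp)
    apply Set.Subset.antisymm
    · rintro _ ⟨y, hy, rfl⟩
      exact B y hy
    · intro y hy
      exact ⟨g.symm y, C y hy, by simp⟩
  refine ⟨A, fun x hx x' hx' => ⟨?_, A x hx x' hx'⟩⟩
  rintro ⟨g, hg, rfl⟩
  have hg' : g '' X = X := hg
  refine ⟨g, rfl, ?_⟩
  unfold cluster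
  rw [Set.image_inter g.injective, hg', g.image_closedBall]
end

section
/- (Local criterion for m-regular t-systems) Let X ⊆ ℝ^d be a t-bonded set and let m be a positive integer. Then the number of orbits of the group Sym(X) acting on X equals m if and only if there exists ρ₀ > 0 such that N(ρ₀) = N(ρ₀ + t) = m and S_x(ρ₀) = S_x(ρ₀ + t) for every x ∈ X. -/
open Metric

/-- The cluster counting function `N(ρ)`: the number of equivalence classes of
`ρ`-clusters of `X` (as `Nat.card`, which is `0` if there are infinitely many). -/
noncomputable def NClusters {d : ℕ} (X : Set (EuclideanSpace ℝ (Fin d))) (ρ : ℝ) : ℕ :=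
  Nat.card (Quot fun a b : X => ClusterEquiv X ρ (a : EuclideanSpace ℝ (Fin d)) b)

/-- The number of orbits of `Sym(X)` acting on `X`. -/
noncomputable def numOrbits {d : ℕ} (X : Set (EuclideanSpace ℝ (Fin d))) : ℕ :=
  Nat.card (Quot fun a b : X => ∃ g ∈ SymX X, g (a : EuclideanSpace ℝ (Fin d)) = b)

/-- Pointwise form of the statement that `g` preserves membership in `X` near `x`. -/
def Pres {d : ℕ} (X : Set (EuclideanSpace ℝ (Fin d)))
    (g : EuclideanSpace ℝ (Fin d) ≃ᵢ EuclideanSpace ℝ (Fin d))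
    (x : EuclideanSpace ℝ (Fin d)) (ρ : ℝ) : Prop :=
  ∀ y, dist y x ≤ ρ → (y ∈ X ↔ g y ∈ X)

theorem pres_iff {d : ℕ} (X : Set (EuclideanSpace ℝ (Fin d)))
    (g : EuclideanSpace ℝ (Fin d) ≃ᵢ EuclideanSpace ℝ (Fin d))
    (x : EuclideanSpace ℝ (Fin d)) (ρ : ℝ) :
    g '' cluster X x ρ = cluster X (g x) ρ ↔ Pres X g x ρ := by
  constructor
  · intro h y hy
    constructor
    · intro hyX
      have : g y ∈ g '' cluster X x ρ := ⟨y, ⟨hyX, hy⟩, rfl⟩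
      rw [h] at this
      exact this.1
    · intro hyX
      have : g y ∈ cluster X (g x) ρ := ⟨hyX, by simpa [g.dist_eq] using hy⟩
      rw [← h] at this
      obtain ⟨z, hz, hzy⟩ := this
      rw [← g.injective hzy]
      exact hz.1
  · intro h
    ext z
    obtain ⟨y, rfl⟩ := g.surjective z
    constructor
    · rintro ⟨w, ⟨hw, hwd⟩, hwy⟩
      rw [← hwy]
      exact ⟨(h w hwd).1 hw, by simpa [g.dist_eq] using hwd⟩
    · rintro ⟨hy, hyd⟩
      have hyd' : dist y x ≤ ρ := by simpa [g.dist_eq] using hyd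
      exact ⟨y, ⟨(h y hyd').2 hy, hyd'⟩, rfl⟩

theorem sym_iff {d : ℕ} (X : Set (EuclideanSpace ℝ (Fin d)))
    (g : EuclideanSpace ℝ (Fin d) ≃ᵢ EuclideanSpace ℝ (Fin d)) :
    g ∈ SymX X ↔ ∀ y, (y ∈ X ↔ g y ∈ X) := by
  constructor
  · intro h y
    have h' : g '' X = X := h
    constructor
    · intro hy
      rw [← h']
      exact ⟨y, hy, rfl⟩
    · intro hy
      rw [← h'] at hy
      obtain ⟨z, hz, hzy⟩ := hy
      rwa [← g.injective hzy]
  · intro h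
    show g '' X = X
    ext z
    obtain ⟨y, rfl⟩ := g.surjective z
    rw [← h y]
    exact g.injective.mem_set_image

theorem clusterEquiv_iff {d : ℕ} (X : Set (EuclideanSpace ℝ (Fin d))) (ρ : ℝ)
    (x x' : EuclideanSpace ℝ (Fin d)) :
    ClusterEquiv X ρ x x' ↔
      ∃ g : EuclideanSpace ℝ (Fin d) ≃ᵢ EuclideanSpace ℝ (Fin d), g x = x' ∧ Pres X g x ρ := by
  constructor
  · rintro ⟨g, rfl, h⟩
    exact ⟨g, rfl, (pres_iff X g x ρ).1 h⟩
  · rintro ⟨g, rfl, h⟩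
    exact ⟨g, rfl, (pres_iff X g x ρ).2 h⟩

theorem symmGroup_iff {d : ℕ} (X : Set (EuclideanSpace ℝ (Fin d))) (ρ : ℝ)
    (x : EuclideanSpace ℝ (Fin d))
    (g : EuclideanSpace ℝ (Fin d) ≃ᵢ EuclideanSpace ℝ (Fin d)) :
    g ∈ symmGroup X x ρ ↔ g x = x ∧ Pres X g x ρ := by
  constructor
  · rintro ⟨h1, h⟩
    refine ⟨h1, (pres_iff X g x ρ).1 ?_⟩
    rw [h1]; exact h
  · rintro ⟨h1, h⟩
    refine ⟨h1, ?_⟩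
    have := (pres_iff X g x ρ).2 h
    rwa [h1] at this

theorem Pres.mono {d : ℕ} {X : Set (EuclideanSpace ℝ (Fin d))}
    {g : EuclideanSpace ℝ (Fin d) ≃ᵢ EuclideanSpace ℝ (Fin d)}
    {x : EuclideanSpace ℝ (Fin d)} {ρ ρ' : ℝ} (h : Pres X g x ρ') (hρ : ρ ≤ ρ') :
    Pres X g x ρ := fun y hy => h y (hy.trans hρ)

theorem Pres.comp {d : ℕ} {X : Set (EuclideanSpace ℝ (Fin d))}
    {g h : EuclideanSpace ℝ (Fin d) ≃ᵢ EuclideanSpace ℝ (Fin d)}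
    {x : EuclideanSpace ℝ (Fin d)} {ρ : ℝ} (hg : Pres X g x ρ) (hh : Pres X h (g x) ρ) :
    Pres X (g.trans h) x ρ := fun y hy =>
  (hg y hy).trans (hh (g y) (by rwa [g.dist_eq]))

theorem Pres.symm {d : ℕ} {X : Set (EuclideanSpace ℝ (Fin d))}
    {g : EuclideanSpace ℝ (Fin d) ≃ᵢ EuclideanSpace ℝ (Fin d)}
    {x : EuclideanSpace ℝ (Fin d)} {ρ : ℝ} (hg : Pres X g x ρ) :
    Pres X g.symm (g x) ρ := fun y hy => by
  have h := hg (g.symm y) (by rw [← g.dist_eq]; simpa using hy)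
  simpa using h.symm

theorem sym_of_pres {d : ℕ} {X : Set (EuclideanSpace ℝ (Fin d))}
    {g : EuclideanSpace ℝ (Fin d) ≃ᵢ EuclideanSpace ℝ (Fin d)} {x : EuclideanSpace ℝ (Fin d)}
    (h : ∀ ρ, Pres X g x ρ) : g ∈ SymX X :=
  (sym_iff X g).2 fun y => h _ y le_rfl

theorem pres_of_sym {d : ℕ} {X : Set (EuclideanSpace ℝ (Fin d))}
    {g : EuclideanSpace ℝ (Fin d) ≃ᵢ EuclideanSpace ℝ (Fin d)}
    (h : g ∈ SymX X) (x : EuclideanSpace ℝ (Fin d)) (ρ : ℝ) : Pres X g x ρ :=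
  fun y _ => (sym_iff X g).1 h y

theorem cluster_equivalence {d : ℕ} (X : Set (EuclideanSpace ℝ (Fin d))) (ρ : ℝ) :
    Equivalence (fun a b : X => ClusterEquiv X ρ (a : EuclideanSpace ℝ (Fin d)) b) := by
  refine ⟨fun a => ?_, fun {a b} h => ?_, fun {a b c} h1 h2 => ?_⟩
  · exact (clusterEquiv_iff _ _ _ _).2 ⟨IsometryEquiv.refl _, rfl, fun y _ => Iff.rfl⟩
  · obtain ⟨g, hg, hp⟩ := (clusterEquiv_iff _ _ _ _).1 h
    refine (clusterEquiv_iff _ _ _ _).2 ⟨g.symm, by rw [← hg]; simp, ?_⟩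
    rw [← hg]; exact hp.symm
  · obtain ⟨g, hg, hp⟩ := (clusterEquiv_iff _ _ _ _).1 h1
    obtain ⟨k, hk, hq⟩ := (clusterEquiv_iff _ _ _ _).1 h2
    refine (clusterEquiv_iff _ _ _ _).2 ⟨g.trans k, by simp [hg, hk], hp.comp ?_⟩
    rw [hg]; exact hq

theorem sym_symm {d : ℕ} {X : Set (EuclideanSpace ℝ (Fin d))}
    {g : EuclideanSpace ℝ (Fin d) ≃ᵢ EuclideanSpace ℝ (Fin d)}
    (h : g ∈ SymX X) : g.symm ∈ SymX X := by
  rw [sym_iff] at *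
  intro y
  simpa using (h (g.symm y)).symm

theorem sym_trans {d : ℕ} {X : Set (EuclideanSpace ℝ (Fin d))}
    {g k : EuclideanSpace ℝ (Fin d) ≃ᵢ EuclideanSpace ℝ (Fin d)}
    (h : g ∈ SymX X) (h' : k ∈ SymX X) : g.trans k ∈ SymX X := by
  rw [sym_iff] at *
  intro y
  exact (h y).trans (h' (g y))

theorem orbit_equivalence {d : ℕ} (X : Set (EuclideanSpace ℝ (Fin d))) :
    Equivalence (fun a b : X => ∃ g ∈ SymX X, g (a : EuclideanSpace ℝ (Fin d)) = b) := by
  refine ⟨fun a => ?_, fun {a b} h => ?_, fun {a b c} h1 h2 => ?_⟩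
  · exact ⟨IsometryEquiv.refl _, (sym_iff _ _).2 fun y => Iff.rfl, rfl⟩
  · obtain ⟨g, hg, hp⟩ := h
    exact ⟨g.symm, sym_symm hg, by rw [← hp]; simp⟩
  · obtain ⟨g, hg, hp⟩ := h1
    obtain ⟨k, hk, hq⟩ := h2
    exact ⟨g.trans k, sym_trans hg hk, by simp [hp, hq]⟩

theorem cluster_finite {d : ℕ} {X : Set (EuclideanSpace ℝ (Fin d))} (hX : UniformlyDiscrete X)
    (x : EuclideanSpace ℝ (Fin d)) (ρ : ℝ) : (cluster X x ρ).Finite := by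
  obtain ⟨r, hr, h⟩ := hX
  obtain ⟨T, -, hT, hc⟩ := finite_cover_balls_of_compact (isCompact_closedBall x ρ) hr
  refine (hT.biUnion (t := fun c => X ∩ ball c r) fun c _ => (h c).finite).subset ?_
  rintro y ⟨hy, hyd⟩
  have := hc hyd
  simp only [Set.mem_iUnion] at this ⊢
  obtain ⟨c, hcT, hyc⟩ := this
  exact ⟨c, hcT, hy, hyc⟩

theorem cluster_span {d : ℕ} {X : Set (EuclideanSpace ℝ (Fin d))} (hX : affineSpan ℝ X = ⊤)
    (x : EuclideanSpace ℝ (Fin d)) : ∃ ρ, affineSpan ℝ (cluster X x ρ) = ⊤ := by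
  obtain ⟨T, hTX, hT, hi⟩ := exists_affineIndependent ℝ (EuclideanSpace ℝ (Fin d)) X
  have hf : T.Finite := finite_set_of_fin_dim_affineIndependent ℝ hi
  obtain ⟨ρ, hρ⟩ := hf.isBounded.subset_closedBall x
  refine ⟨ρ, top_le_iff.1 ?_⟩
  rw [← hX, ← hT]
  exact affineSpan_mono ℝ fun y hy => ⟨hTX hy, hρ hy⟩

theorem isom_ext {d : ℕ} {S : Set (EuclideanSpace ℝ (Fin d))} (hS : affineSpan ℝ S = ⊤)
    {g k : EuclideanSpace ℝ (Fin d) ≃ᵢ EuclideanSpace ℝ (Fin d)}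
    (h : ∀ y ∈ S, g y = k y) : g = k := by
  have := AffineMap.ext_on (f := g.toRealAffineIsometryEquiv.toAffineEquiv.toAffineMap)
    (g := k.toRealAffineIsometryEquiv.toAffineEquiv.toAffineMap) hS
    (fun y hy => by simpa using h y hy)
  ext1 y
  simpa using congrArg (fun f => f y) this

theorem isom_finite {d : ℕ} {X : Set (EuclideanSpace ℝ (Fin d))} (hX : UniformlyDiscrete X)
    (x x' : EuclideanSpace ℝ (Fin d)) (ρ : ℝ) (hs : affineSpan ℝ (cluster X x ρ) = ⊤) :
    {g : EuclideanSpace ℝ (Fin d) ≃ᵢ EuclideanSpace ℝ (Fin d) |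
      g x = x' ∧ Pres X g x ρ}.Finite := by
  have f1 : Finite (cluster X x ρ) := cluster_finite hX x ρ
  have f2 : Finite (cluster X x' ρ) := cluster_finite hX x' ρ
  let F : {g : EuclideanSpace ℝ (Fin d) ≃ᵢ EuclideanSpace ℝ (Fin d) |
      g x = x' ∧ Pres X g x ρ} → (cluster X x ρ → cluster X x' ρ) := fun g y =>
    ⟨g.1 y.1, (g.2.2 y.1 y.2.2).1 y.2.1, by
      have := y.2.2
      have h2 : dist (g.1 y.1) (g.1 x) ≤ ρ := by
        rw [g.1.dist_eq]; exact this
      have h3 : g.1 x = x' := g.2.1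
      rw [h3] at h2
      exact h2⟩
  have hF : Function.Injective F := by
    intro g k hgk
    apply Subtype.ext
    apply isom_ext hs
    intro y hy
    exact congrArg Subtype.val (congrFun hgk ⟨y, hy⟩)
  exact Finite.of_injective F hF

theorem eventually_sym {d : ℕ} {X : Set (EuclideanSpace ℝ (Fin d))} (hX : UniformlyDiscrete X)
    (hS : affineSpan ℝ X = ⊤) (x x' : EuclideanSpace ℝ (Fin d)) :
    ∀ᶠ ρ in Filter.atTop, ∀ g : EuclideanSpace ℝ (Fin d) ≃ᵢ EuclideanSpace ℝ (Fin d),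
      g x = x' → Pres X g x ρ → g ∈ SymX X := by
  obtain ⟨ρ₁, h₁⟩ := cluster_span hS x
  have hf := isom_finite hX x x' ρ₁ h₁
  have : ∀ᶠ ρ in Filter.atTop, ∀ g ∈ {g : EuclideanSpace ℝ (Fin d) ≃ᵢ EuclideanSpace ℝ (Fin d) |
      g x = x' ∧ Pres X g x ρ₁}, Pres X g x ρ → g ∈ SymX X := by
    rw [Filter.eventually_all_finite hf]
    intro g _
    by_cases hg : g ∈ SymX X
    · exact Filter.Eventually.of_forall fun _ _ => hg
    · have : ∃ ρ, ¬ Pres X g x ρ := by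
        by_contra hc
        push Not at hc
        exact hg (sym_of_pres hc)
      obtain ⟨ρ₂, h₂⟩ := this
      filter_upwards [Filter.eventually_ge_atTop ρ₂] with ρ hρ hp
      exact absurd (hp.mono hρ) h₂
  filter_upwards [this, Filter.eventually_ge_atTop ρ₁] with ρ h hρ g hg hp
  exact h g ⟨hg, hp.mono hρ⟩ hp

theorem quot_exact {α : Type*} {r : α → α → Prop} (hr : Equivalence r) {a b : α}
    (h : Quot.mk r a = Quot.mk r b) : r a b :=
  hr.eqvGen_iff.1 (Quot.eqvGen_exact h)

theorem card_congr_rel {α : Type*} {r s : α → α → Prop} (h : ∀ a b, r a b ↔ s a b) :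
    Nat.card (Quot r) = Nat.card (Quot s) := by
  have : r = s := by ext a b; exact h a b
  rw [this]

theorem rel_of_card {α : Type*} {r s : α → α → Prop} (hr : Equivalence r)
    (h : ∀ a b, r a b → s a b) (hpos : 0 < Nat.card (Quot r))
    (hc : Nat.card (Quot r) = Nat.card (Quot s)) (hs : Equivalence s) {a b : α} (hab : s a b) :
    r a b := by
  have f1 : Finite (Quot r) := (Nat.card_pos_iff.1 hpos).2
  have f2 : Finite (Quot s) := (Nat.card_pos_iff.1 (hc ▸ hpos)).2
  let F : Quot r → Quot s := Quot.map id h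
  have hF : Function.Surjective F := by
    intro q
    induction q using Quot.ind with
    | mk a => exact ⟨Quot.mk r a, rfl⟩
  have hb : Function.Bijective F := hF.bijective_of_nat_card_le hc.le
  exact quot_exact hr (hb.1 (show Quot.mk s a = Quot.mk s b from Quot.sound hab))

theorem chain_pres {d : ℕ} {X : Set (EuclideanSpace ℝ (Fin d))} {t ρ : ℝ} (hρ : 0 < ρ)
    (hstep : ∀ (g : EuclideanSpace ℝ (Fin d) ≃ᵢ EuclideanSpace ℝ (Fin d)), ∀ x ∈ X, g x ∈ X →
      Pres X g x ρ → Pres X g x (ρ + t))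
    (g : EuclideanSpace ℝ (Fin d) ≃ᵢ EuclideanSpace ℝ (Fin d))
    {x y : EuclideanSpace ℝ (Fin d)} (hxy : TChain X t x y) (hg : Pres X g x ρ) :
    g x ∈ X → g y ∈ X := by
  intro hx
  obtain ⟨m, c, h0, hm, hc, hd⟩ := hxy
  have : ∀ i ≤ m, g (c i) ∈ X ∧ Pres X g (c i) ρ := by
    intro i
    induction i with
    | zero => intro _; rw [h0]; exact ⟨hx, hg⟩
    | succ i ih =>
      intro hi
      obtain ⟨h1, h2⟩ := ih (by omega)
      have h3 := hstep g (c i) (hc i (by omega)) h1 h2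
      have h4 := hd i (by omega)
      rw [dist_comm] at h4
      refine ⟨(h3 _ (by linarith)).1 (hc _ hi), fun z hz => h3 z ?_⟩
      linarith [dist_triangle z (c (i + 1)) (c i)]
  rw [← hm]
  exact (this m le_rfl).1

/-- Local criterion for m-regular t-systems: a `t`-bonded set `X` has
exactly `m` orbits under `Sym(X)` iff there is `ρ₀ > 0` with
`N(ρ₀) = N(ρ₀ + t) = m` and `S_x(ρ₀) = S_x(ρ₀ + t)` for all `x ∈ X`. -/
theorem m_regular_criterion {d : ℕ}
    (X : Set (EuclideanSpace ℝ (Fin d))) (t : ℝ) (ht : 0 < t) (hX : TBonded X t)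
    (m : ℕ) (hm : 0 < m) :
    numOrbits X = m ↔
      ∃ ρ₀ > 0, NClusters X ρ₀ = m ∧ NClusters X (ρ₀ + t) = m ∧
        ∀ x ∈ X, symmGroup X x ρ₀ = symmGroup X x (ρ₀ + t) := by
  obtain ⟨hU, hS, hC⟩ := hX
  constructor
  · intro hN
    let R := fun a b : X => ∃ g ∈ SymX X, g (a : EuclideanSpace ℝ (Fin d)) = b
    have hR : Equivalence R := orbit_equivalence X
    have hN' : Nat.card (Quot R) = m := hN
    have hfin : Finite (Quot R) := (Nat.card_pos_iff.1 (hN' ▸ hm)).2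
    have hev : ∀ᶠ ρ in Filter.atTop, ∀ p q : Quot R,
        ∀ g : EuclideanSpace ℝ (Fin d) ≃ᵢ EuclideanSpace ℝ (Fin d),
        g (p.out : X) = (q.out : X) → Pres X g (p.out : X) ρ → g ∈ SymX X := by
      rw [Filter.eventually_all]; intro p
      rw [Filter.eventually_all]; intro q
      exact eventually_sym hU hS _ _
    have hev2 : ∀ᶠ ρ in Filter.atTop,
        ∀ g : EuclideanSpace ℝ (Fin d) ≃ᵢ EuclideanSpace ℝ (Fin d), ∀ x ∈ X, g x ∈ X →
        Pres X g x ρ → g ∈ SymX X := by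
      filter_upwards [hev] with ρ h g x hx hgx hp
      obtain ⟨k, hk, hkx⟩ : R (Quot.mk R ⟨x, hx⟩).out ⟨x, hx⟩ := quot_exact hR (Quot.out_eq _)
      obtain ⟨l, hl, hlx⟩ : R ⟨g x, hgx⟩ (Quot.mk R ⟨g x, hgx⟩).out :=
        hR.symm (quot_exact hR (Quot.out_eq _))
      simp only at hkx hlx
      have h1 := h (Quot.mk R ⟨x, hx⟩) (Quot.mk R ⟨g x, hgx⟩) ((k.trans g).trans l) (by simp [hkx, hlx])
        (((pres_of_sym hk _ ρ).comp (by rw [hkx]; exact hp)).comp (pres_of_sym hl _ ρ))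
      have h2 := sym_trans (sym_trans (sym_symm hk) h1) (sym_symm hl)
      have h3 : (k.symm.trans ((k.trans g).trans l)).trans l.symm = g := by
        ext1 y; simp
      rwa [h3] at h2
    obtain ⟨ρ₀, h0⟩ := Filter.eventually_atTop.1 hev2
    have hcard : ∀ ρ ≥ ρ₀, NClusters X ρ = m := by
      intro ρ hρ
      rw [← hN']
      apply card_congr_rel
      intro a b
      rw [clusterEquiv_iff]
      constructor
      · rintro ⟨g, hg, hp⟩
        exact ⟨g, h0 ρ hρ g a a.2 (hg ▸ b.2) hp, hg⟩
      · rintro ⟨g, hg, hp⟩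
        exact ⟨g, hp, pres_of_sym hg _ _⟩
    refine ⟨max ρ₀ 1, by positivity, hcard _ (le_max_left _ _),
      hcard _ (by linarith [le_max_left ρ₀ 1]), fun x hx => ?_⟩
    ext g
    rw [symmGroup_iff, symmGroup_iff]
    constructor
    · rintro ⟨hg, hp⟩
      exact ⟨hg, pres_of_sym (h0 _ (le_max_left _ _) g x hx (hg.symm ▸ hx) hp) _ _⟩
    · rintro ⟨hg, hp⟩
      exact ⟨hg, hp.mono (by linarith)⟩
  · rintro ⟨ρ, hρ, h1, h2, h3⟩
    have hstep : ∀ (g : EuclideanSpace ℝ (Fin d) ≃ᵢ EuclideanSpace ℝ (Fin d)), ∀ x ∈ X, g x ∈ X →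
        Pres X g x ρ → Pres X g x (ρ + t) := by
      intro g x hx hgx hp
      have hce : ClusterEquiv X (ρ + t) x (g x) := by
        refine rel_of_card (a := (⟨x, hx⟩ : X)) (b := ⟨g x, hgx⟩) (cluster_equivalence X (ρ + t))
          (s := fun a b : X => ClusterEquiv X ρ (a : EuclideanSpace ℝ (Fin d)) b)
          ?_ (lt_of_lt_of_eq hm h2.symm) (h2.trans h1.symm) (cluster_equivalence X ρ) ?_
        · intro a b hab
          obtain ⟨k, hk, hp⟩ := (clusterEquiv_iff _ _ _ _).1 hab
          exact (clusterEquiv_iff _ _ _ _).2 ⟨k, hk, hp.mono (by linarith)⟩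
        · exact (clusterEquiv_iff _ _ _ _).2 ⟨g, rfl, hp⟩
      obtain ⟨k, hk, hkp⟩ := (clusterEquiv_iff _ _ _ _).1 hce
      have hks : Pres X k.symm (g x) (ρ + t) := hk ▸ hkp.symm
      have hmem : g.trans k.symm ∈ symmGroup X x ρ :=
        (symmGroup_iff _ _ _ _).2 ⟨by simp [← hk], hp.comp (hks.mono (by linarith))⟩
      rw [h3 x hx] at hmem
      obtain ⟨h5, h6⟩ := (symmGroup_iff _ _ _ _).1 hmem
      have h7 := h6.comp (h := k) (by rw [h5]; exact hkp)
      have h8 : (g.trans k.symm).trans k = g := by ext1 y; simp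
      rwa [h8] at h7
    rw [← h1]
    apply card_congr_rel
    intro a b
    rw [clusterEquiv_iff]
    constructor
    · rintro ⟨g, hg, hp⟩
      exact ⟨g, hp, pres_of_sym hg _ _⟩
    · rintro ⟨g, hg, hp⟩
      refine ⟨g, (sym_iff _ _).2 fun y => ⟨fun hy => ?_, fun hy => ?_⟩, hg⟩
      · exact chain_pres hρ hstep g (hC a a.2 y hy) hp (hg ▸ b.2)
      · have := chain_pres hρ hstep g.symm (hC b b.2 (g y) hy) (hg ▸ hp.symm)
          (by rw [← hg]; simp)
        simpa using this
end

section
/- For every t > 0 and every M > 0 there exist a number k > M and a t-bonded set X ⊆ ℝ² such that the kt-clusters of X fall into finitely many equivalence classes (N(kt) < ∞), but for every ε > 0 the (kt + ε)-clusters of X fall into infinitely many equivalence classes (N(kt + ε) = ∞). In particular, such an X is a t-bonded set that is not of finite type. -/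
open Metric

namespace TB

/-- horizontal spacing of the row `j` -/
noncomputable def cc (α : ℝ) (k j : ℕ) : ℝ := if j = k then α else 1

/-- the point number `m` in the row `j` -/
noncomputable def P (t α : ℝ) (k : ℕ) (m : ℤ) (j : ℕ) : EuclideanSpace ℝ (Fin 2) :=
  !₂[t * (cc α k j * m), t * j]

def V (k : ℕ) (m : ℤ) (j : ℕ) : Prop := j ≤ k ∧ (j = 0 ∨ j = k ∨ m = 0)

def XX (t α : ℝ) (k : ℕ) : Set (EuclideanSpace ℝ (Fin 2)) :=
  {p | ∃ m j, V k m j ∧ p = P t α k m j}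

lemma dist_P (t α : ℝ) (ht : 0 < t) (k : ℕ) (m m' : ℤ) (j j' : ℕ) :
    dist (P t α k m j) (P t α k m' j') =
      t * √((cc α k j * m - cc α k j' * m') ^ 2 + ((j : ℝ) - j') ^ 2) := by
  rw [EuclideanSpace.dist_eq, Fin.sum_univ_two]
  simp only [P, Real.dist_eq, sq_abs]
  have : ∀ z : ℝ, t * √z = √(t ^ 2 * z) := by
    intro z
    rw [Real.sqrt_mul (by positivity), Real.sqrt_sq ht.le]
  rw [this]
  congr 1
  simp
  ring

lemma dist_P_le (t α : ℝ) (ht : 0 < t) (k : ℕ) (m m' : ℤ) (j j' : ℕ) (s : ℝ) (hs : 0 ≤ s) :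
    dist (P t α k m j) (P t α k m' j') ≤ t * s ↔
      (cc α k j * m - cc α k j' * m') ^ 2 + ((j : ℝ) - j') ^ 2 ≤ s ^ 2 := by
  rw [dist_P t α ht, mul_le_mul_iff_right₀ ht, Real.sqrt_le_left hs]

lemma cc_ge {α : ℝ} (h1 : α < 1) (k j : ℕ) : α ≤ cc α k j := by
  unfold cc; split_ifs <;> linarith

lemma cc_le {α : ℝ} (h1 : α < 1) (k j : ℕ) : cc α k j ≤ 1 := by
  unfold cc; split_ifs <;> linarith

lemma one_le_sq {a b : ℤ} (h : a ≠ b) : (1 : ℝ) ≤ ((a : ℝ) - b) ^ 2 := by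
  have h1 : a - b ≠ 0 := sub_ne_zero.2 h
  have h2 : 1 ≤ (a - b) ^ 2 := by
    have := sq_pos_of_ne_zero h1 
    omega
  exact_mod_cast h2

lemma sep (t α : ℝ) (ht : 0 < t) (h0 : 0 < α) (h1 : α < 1) (k : ℕ) (m m' : ℤ) (j j' : ℕ)
    (h : dist (P t α k m j) (P t α k m' j') < t * α) : m = m' ∧ j = j' := by
  rw [dist_P t α ht, mul_lt_mul_iff_right₀ ht, Real.sqrt_lt' h0] at h
  have hj : j = j' := by
    by_contra hne
    have : (1 : ℝ) ≤ (((j : ℤ) : ℝ) - (j' : ℤ)) ^ 2 := one_le_sq (by exact_mod_cast hne)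
    push_cast at this
    nlinarith [sq_nonneg (cc α k j * m - cc α k j' * m')]
  subst hj
  refine ⟨?_, rfl⟩
  by_contra hne
  have h2 := one_le_sq hne
  have h3 := cc_ge h1 k j
  have h4 : α ^ 2 ≤ cc α k j ^ 2 := by gcongr
  have : α ^ 2 * 1 ≤ cc α k j ^ 2 * ((m : ℝ) - m') ^ 2 := by gcongr
  nlinarith

lemma ud (t α : ℝ) (ht : 0 < t) (h0 : 0 < α) (h1 : α < 1) (k : ℕ) :
    UniformlyDiscrete (XX t α k) := by
  refine ⟨t * α / 2, by positivity, ?_⟩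
  rintro c _ ⟨⟨m, j, -, rfl⟩, hx⟩ _ ⟨⟨m', j', -, rfl⟩, hy⟩
  have : dist (P t α k m j) (P t α k m' j') < t * α := by
    have := dist_triangle_right (P t α k m j) (P t α k m' j') c
    rw [Metric.mem_ball] at hx hy
    linarith
  obtain ⟨rfl, rfl⟩ := sep t α ht h0 h1 k m m' j j' this
  rfl

lemma span (t α : ℝ) (ht : 0 < t) (k : ℕ) (hk : 1 ≤ k) (h0 : 0 < α) :
    affineSpan ℝ (XX t α k) = ⊤ := by
  rw [eq_top_iff]
  intro p _
  have a0 : P t α k 0 0 ∈ affineSpan ℝ (XX t α k) :=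
    subset_affineSpan ℝ _ ⟨0, 0, ⟨by omega, by simp⟩, rfl⟩
  have a1 : P t α k 1 0 ∈ affineSpan ℝ (XX t α k) :=
    subset_affineSpan ℝ _ ⟨1, 0, ⟨by omega, by simp⟩, rfl⟩
  have a2 : P t α k 0 1 ∈ affineSpan ℝ (XX t α k) :=
    subset_affineSpan ℝ _ ⟨0, 1, ⟨by omega, by simp⟩, rfl⟩
  have h := AffineSubspace.smul_vsub_vadd_mem _ (p 0 / t) a1 a0
    (AffineSubspace.smul_vsub_vadd_mem _ (p 1 / t) a2 a0 a0)
  convert h using 1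
  have hk0 : ¬ (0 = k) := by omega
  ext i
  fin_cases i <;> simp [P, cc, hk0] <;> field_simp

def Step (X : Set (EuclideanSpace ℝ (Fin 2))) (t : ℝ) (a b : EuclideanSpace ℝ (Fin 2)) : Prop :=
  a ∈ X ∧ b ∈ X ∧ dist a b ≤ t

lemma chain_of {X : Set (EuclideanSpace ℝ (Fin 2))} {t : ℝ} {a b : EuclideanSpace ℝ (Fin 2)}
    (ha : a ∈ X) (h : Relation.ReflTransGen (Step X t) a b) : TChain X t a b := by
  induction h with
  | refl => exact ⟨0, fun _ => a, rfl, rfl, fun _ _ => ha, fun i hi => by omega⟩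
  | @tail b c _ hbc ih =>
    obtain ⟨m, f, f0, fm, fX, fd⟩ := ih
    refine ⟨m + 1, fun i => if i ≤ m then f i else c, by simp [f0], by simp, ?_, ?_⟩
    · intro i _
      dsimp only
      split_ifs with h
      · exact fX i h
      · exact hbc.2.1
    · intro i hi
      have h1 : i ≤ m := by omega
      dsimp only
      rw [if_pos h1]
      split_ifs with h
      · exact fd i (by omega)
      · have : i = m := by omega
        rw [this, fm]; exact hbc.2.2

lemma step_symm (X : Set (EuclideanSpace ℝ (Fin 2))) (t : ℝ) : Std.Symm (Step X t) :=
  ⟨fun _ _ h => ⟨h.2.1, h.1, by rw [dist_comm]; exact h.2.2⟩⟩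

lemma rtg_symm {X : Set (EuclideanSpace ℝ (Fin 2))} {t : ℝ} {a b : EuclideanSpace ℝ (Fin 2)}
    (h : Relation.ReflTransGen (Step X t) a b) : Relation.ReflTransGen (Step X t) b a := by
  induction h with
  | refl => exact .refl
  | tail _ hbc ih => exact .head ((step_symm X t).symm _ _ hbc) ih

lemma hstep (t α : ℝ) (ht : 0 < t) (h0 : 0 < α) (h1 : α < 1) (k : ℕ) (m : ℤ) (j : ℕ)
    (hj : j = 0 ∨ j = k) : Step (XX t α k) t (P t α k m j) (P t α k (m + 1) j) := by
  refine ⟨⟨m, j, ⟨by omega, by tauto⟩, rfl⟩, ⟨m + 1, j, ⟨by omega, by tauto⟩, rfl⟩, ?_⟩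
  have := (dist_P_le t α ht k m (m+1) j j 1 zero_le_one).2 (by
    have a := cc_ge h1 k j
    have b := cc_le h1 k j
    push_cast
    nlinarith)
  simpa using this

lemma conn (t α : ℝ) (ht : 0 < t) (h0 : 0 < α) (h1 : α < 1) (k : ℕ) (m : ℤ) (j : ℕ)
    (hV : V k m j) :
    Relation.ReflTransGen (Step (XX t α k) t) (P t α k 0 0) (P t α k m j) := by
  have hcol : ∀ j ≤ k, Relation.ReflTransGen (Step (XX t α k) t) (P t α k 0 0) (P t α k 0 j) := by
    intro j
    induction j with
    | zero => intro _; exact .refl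
    | succ j ih =>
      intro hj
      refine .tail (ih (by omega)) ⟨⟨0, j, ⟨by omega, by tauto⟩, rfl⟩,
        ⟨0, j + 1, ⟨by omega, by tauto⟩, rfl⟩, ?_⟩
      have := (dist_P_le t α ht k 0 0 j (j + 1) 1 zero_le_one).2 (by simp)
      simpa using this
  refine (hcol j hV.1).trans ?_
  by_cases hm : m = 0
  · rw [hm]
  have hj : j = 0 ∨ j = k := by have := hV.2; tauto
  clear hV hm
  induction m with
  | zero => exact .refl
  | succ i ih => exact .tail ih (hstep t α ht h0 h1 k _ j hj)
  | pred i ih =>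
    refine .tail ih ((step_symm _ _).symm _ _ ?_)
    have := hstep t α ht h0 h1 k (-(i:ℤ) - 1) j hj
    simpa using this

lemma irr_zero {α : ℝ} (hα : Irrational α) {m n : ℤ} (h : α * m - n = 0) : n = 0 := by
  by_cases hm : m = 0
  · subst hm; simp at h; exact h
  · exfalso
    have := hα.mul_intCast hm
    exact this.ne_int n (by linarith)

lemma row (t α : ℝ) (ht : 0 < t) (hα : Irrational α) (k : ℕ) (hk : 1 ≤ k) (m : ℤ)
    (j : ℕ) (hj : j = 0 ∨ j = k) (hm : (k : ℝ) < |cc α k j * m|)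
    (p : EuclideanSpace ℝ (Fin 2)) :
    p ∈ cluster (XX t α k) (P t α k m j) (t * k) ↔
      ∃ i : ℤ, p = P t α k (m + i) j ∧ (cc α k j * i) ^ 2 ≤ (k : ℝ) ^ 2 := by
  have hm0 : m ≠ 0 := by
    rintro rfl
    simp at hm
    have : (0 : ℝ) ≤ k := by positivity
    linarith
  constructor
  · rintro ⟨⟨m', j', hV, rfl⟩, hd⟩
    rw [Metric.mem_closedBall, dist_P_le t α ht k _ _ _ _ _ (by positivity)] at hd
    by_cases hjj : j' = j
    · subst hjj
      refine ⟨m' - m, by simp, ?_⟩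
      push_cast
      nlinarith
    exfalso
    have hm'0 : m' ≠ 0 := by
      rintro rfl
      have := sq_lt_sq' (a := (k : ℝ)) (b := |cc α k j * m|)
        (by linarith [abs_nonneg (cc α k j * m), (by positivity : (0:ℝ) ≤ k)]) hm
      rw [sq_abs] at this
      simp at hd
      nlinarith [sq_nonneg ((j' : ℝ) - j)]
    have hj' : j' = 0 ∨ j' = k := by have := hV.2; tauto
    have hk0 : ¬ (0 = k) := by omega
    rcases hj with rfl | rfl <;> rcases hj' with rfl | rfl
    · exact hjj rfl
    · simp [cc, hk0] at hd
      have h0 : (α * m' - m : ℝ) = 0 := by nlinarith [sq_nonneg (α * m' - m : ℝ)]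
      exact hm0 (irr_zero hα h0)
    · simp [cc, hk0] at hd
      have h0 : (α * m - m' : ℝ) = 0 := by nlinarith [sq_nonneg (α * m - m' : ℝ)]
      exact hm'0 (irr_zero hα h0)
    · exact hjj rfl
  · rintro ⟨i, rfl, hi⟩
    refine ⟨⟨m + i, j, ⟨by omega, by tauto⟩, rfl⟩, ?_⟩
    rw [Metric.mem_closedBall, dist_P_le t α ht k _ _ _ _ _ (by positivity)]
    push_cast
    nlinarith

lemma P_shift (t α : ℝ) (k : ℕ) (m m' i : ℤ) (j : ℕ) :
    P t α k (m + i) j + (P t α k m' j - P t α k m j) = P t α k (m' + i) j := by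
  ext l
  fin_cases l <;> simp [P] 
  ring

lemma equiv_row (t α : ℝ) (ht : 0 < t) (hα : Irrational α) (k : ℕ) (hk : 1 ≤ k) (m m' : ℤ)
    (j : ℕ) (hj : j = 0 ∨ j = k) (hm : (k : ℝ) < |cc α k j * m|)
    (hm' : (k : ℝ) < |cc α k j * m'|) :
    ClusterEquiv (XX t α k) (t * k) (P t α k m j) (P t α k m' j) := by
  refine ⟨IsometryEquiv.addRight (P t α k m' j - P t α k m j), by simp, ?_⟩
  ext p
  rw [row t α ht hα k hk m' j hj hm', Set.mem_image]
  constructor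
  · rintro ⟨q, hq, rfl⟩
    rw [row t α ht hα k hk m j hj hm] at hq
    obtain ⟨i, rfl, hi⟩ := hq
    exact ⟨i, by simpa using P_shift t α k m m' i j, hi⟩
  · rintro ⟨i, rfl, hi⟩
    refine ⟨P t α k (m + i) j, (row t α ht hα k hk m j hj hm _).2 ⟨i, rfl, hi⟩, ?_⟩
    simpa using P_shift t α k m m' i j

lemma ce_equiv (X : Set (EuclideanSpace ℝ (Fin 2))) (ρ : ℝ) :
    Equivalence (fun a b : X => ClusterEquiv X ρ (a : EuclideanSpace ℝ (Fin 2)) b) := by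
  refine ⟨fun a => ⟨IsometryEquiv.refl _, rfl, Set.image_id _⟩, ?_, ?_⟩
  · rintro a b ⟨g, h1, h2⟩
    refine ⟨g.symm, (g.symm_apply_eq).2 h1.symm, ?_⟩
    simp only [← h2, Set.image_image, IsometryEquiv.symm_apply_apply, Set.image_id']
  · rintro a b c ⟨g, h1, h2⟩ ⟨g', h1', h2'⟩
    refine ⟨g.trans g', by simp [h1, h1'], ?_⟩
    simp only [← h2', ← h2, Set.image_image]
    rfl

lemma fin_part (t α : ℝ) (ht : 0 < t) (hα : Irrational α) (h0 : 0 < α) (h1 : α < 1)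
    (k : ℕ) (hk : 1 ≤ k) :
    Finite (Quot fun a b : XX t α k =>
        ClusterEquiv (XX t α k) (t * k) (a : EuclideanSpace ℝ (Fin 2)) b) := by
  obtain ⟨B, hB⟩ := exists_nat_gt (k / α)
  have hB' : (k : ℝ) < α * B := by rw [div_lt_iff₀ h0] at hB; linarith
  let A : Set (ℤ × ℕ) := {p | p ∈ Set.Icc (-(B:ℤ)) B ×ˢ Set.Iic k ∧ V k p.1 p.2}
  have hA : A.Finite :=
    ((Set.finite_Icc (-(B:ℤ)) B).prod (Set.finite_Iic k)).subset (fun p hp => hp.1)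
  have : Finite A := hA
  let f : A → Quot (fun a b : XX t α k =>
        ClusterEquiv (XX t α k) (t * k) (a : EuclideanSpace ℝ (Fin 2)) b) :=
    fun p => Quot.mk _ ⟨P t α k p.1.1 p.1.2, ⟨_, _, p.2.2, rfl⟩⟩
  refine Finite.of_surjective f ?_
  intro q
  induction q using Quot.ind with | mk a =>
  obtain ⟨_, m, j, hV, rfl⟩ := a
  by_cases hm : m ∈ Set.Icc (-(B:ℤ)) B
  · exact ⟨⟨(m, j), ⟨⟨hm, hV.1⟩, hV⟩⟩, rfl⟩
  have hm0 : m ≠ 0 := by rintro rfl; simp at hm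
  have hj : j = 0 ∨ j = k := by have := hV.2; tauto
  refine ⟨⟨(B, j), ⟨⟨by simp, hV.1⟩, ⟨hV.1, by tauto⟩⟩⟩, ?_⟩
  apply Quot.sound
  have key : ∀ z : ℤ, (B : ℤ) ≤ |z| → (k : ℝ) < |cc α k j * z| := by
    intro z hz
    have hz' : (B : ℝ) ≤ |(z : ℝ)| := by exact_mod_cast hz
    have hc := cc_ge h1 k j
    have hc0 : 0 ≤ cc α k j := by linarith
    rw [abs_mul, abs_of_nonneg hc0]
    calc (k : ℝ) < α * B := hB'
      _ ≤ _ := by gcongr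
  refine equiv_row t α ht hα k hk _ _ j hj (key _ (by simp)) (key _ ?_)
  rw [Set.mem_Icc, ← abs_le] at hm
  omega

lemma approx {α : ℝ} (h0 : 0 < α) (η : ℝ) (hη : 0 < η) (N : ℕ) :
    ∃ n m : ℤ, (N : ℤ) < n ∧ |α * m - n| < η := by
  obtain ⟨Q, hQ⟩ := exists_nat_gt (max ((N + 1) / η) (1 / α))
  have hQ1 := (le_max_left _ _).trans_lt hQ
  have hQ2 := (le_max_right _ _).trans_lt hQ
  have hQ0 : (0 : ℝ) < Q := lt_trans (by positivity) hQ2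
  obtain ⟨j, l, hl, -, h⟩ := Real.exists_int_int_abs_mul_sub_le α (n := Q) (by exact_mod_cast hQ0)
  rw [div_lt_iff₀ hη] at hQ1
  rw [div_lt_iff₀ h0] at hQ2
  rw [le_div_iff₀ (by positivity)] at h
  have hl' : (1 : ℝ) ≤ l := by exact_mod_cast hl
  have hj : 0 < j := by
    by_contra hj
    have hj' : (j : ℝ) ≤ 0 := by exact_mod_cast not_lt.1 hj
    have h2 : α ≤ |(l : ℝ) * α - j| := by
      refine le_trans ?_ (le_abs_self _)
      nlinarith
    nlinarith
  refine ⟨(N + 1) * j, (N + 1) * l, by nlinarith, ?_⟩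
  push_cast
  rw [show α * (((N : ℝ) + 1) * l) - (N + 1) * j = (N + 1) * (l * α - j) by ring, abs_mul,
    abs_of_pos (by positivity)]
  have hd := abs_nonneg ((l : ℝ) * α - j)
  have hN : (0 : ℝ) < (N : ℝ) + 1 := by positivity
  by_contra hcon
  push Not at hcon
  nlinarith

lemma not_equiv (t α : ℝ) (ht : 0 < t) (hα : Irrational α) (k : ℕ) (hk : 1 ≤ k) (s : ℝ)
    (hs : k < s) (n n' m : ℤ) (hn : s < n) (hn' : s < n') (hm1 : |α * m - n| < 1)
    (hm2 : (α * m - n) ^ 2 + (k : ℝ) ^ 2 ≤ s ^ 2)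
    (h : ClusterEquiv (XX t α k) (t * s) (P t α k n 0) (P t α k n' 0)) : n = n' := by
  have hkp : (0 : ℝ) ≤ k := by positivity
  have hs0 : 0 ≤ s := by linarith
  have hk0 : ¬ (0 = k) := by omega
  obtain ⟨g, g1, g2⟩ := h
  have hy : P t α k m k ∈ cluster (XX t α k) (P t α k n 0) (t * s) := by
    refine ⟨⟨m, k, ⟨le_rfl, by tauto⟩, rfl⟩, ?_⟩
    rw [Metric.mem_closedBall, dist_P_le t α ht k _ _ _ _ _ hs0]
    simpa [cc, hk0] using hm2
  have hgy : g (P t α k m k) ∈ cluster (XX t α k) (P t α k n' 0) (t * s) :=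
    g2 ▸ Set.mem_image_of_mem _ hy
  have hd : dist (g (P t α k m k)) (P t α k n' 0) = dist (P t α k m k) (P t α k n 0) := by
    rw [← g1, g.dist_eq]
  obtain ⟨⟨m', j', hV, he⟩, hdle⟩ := hgy
  rw [he] at hd hdle
  rw [dist_P t α ht, dist_P t α ht, mul_right_inj' ht.ne',
    Real.sqrt_inj (by positivity) (by positivity)] at hd
  rw [Metric.mem_closedBall, dist_P_le t α ht k _ _ _ _ _ hs0] at hdle
  have hnpos : (0 : ℝ) < n := by linarith
  have hn0 : n ≠ 0 := by rintro rfl; simp at hnpos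
  have hn'pos : (0 : ℝ) < n' := by linarith
  have hδ : α * m - n ≠ 0 := fun h => hn0 (irr_zero hα h)
  have hδ1 : (α * m - n) ^ 2 < 1 := by
    rw [← sq_abs]; nlinarith [abs_nonneg (α * m - n)]
  have hδ0 : 0 < (α * m - n) ^ 2 := by positivity
  rcases hV.2 with rfl | rfl | rfl
  · exfalso
    simp [cc, hk0] at hd
    have a1 : (k : ℤ) ^ 2 < (m' - n') ^ 2 := by
      have : (k : ℝ) ^ 2 < ((m' : ℝ) - n') ^ 2 := by linarith
      exact_mod_cast this
    have a2 : (m' - n') ^ 2 < ((k : ℤ) + 1) ^ 2 := by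
      have : ((m' : ℝ) - n') ^ 2 < ((k : ℝ) + 1) ^ 2 := by nlinarith
      exact_mod_cast this
    have b1 := sq_lt_sq.1 a1
    have b2 := sq_lt_sq.1 a2
    rw [abs_of_nonneg (by positivity : (0:ℤ) ≤ (k:ℤ))] at b1
    rw [abs_of_nonneg (by positivity : (0:ℤ) ≤ (k:ℤ) + 1)] at b2
    omega
  · simp [cc, hk0] at hd
    rcases sq_eq_sq_iff_eq_or_eq_neg.1 hd with h | h
    · have : α * ((m' - m : ℤ) : ℝ) - ((n' - n : ℤ) : ℝ) = 0 := by push_cast; linarith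
      have := irr_zero hα this
      omega
    · have : α * ((m' + m : ℤ) : ℝ) - ((n' + n : ℤ) : ℝ) = 0 := by push_cast; linarith
      have := irr_zero hα this
      have hc : (n' : ℝ) + n = 0 := by exact_mod_cast this
      linarith
  · exfalso
    simp [cc, hk0] at hdle
    nlinarith [sq_nonneg (j' : ℝ)]

lemma inf_part (t α : ℝ) (ht : 0 < t) (hα : Irrational α) (h0 : 0 < α)
    (k : ℕ) (hk : 1 ≤ k) (s : ℝ) (hs : k < s) :
    Infinite (Quot fun a b : XX t α k =>
        ClusterEquiv (XX t α k) (t * s) (a : EuclideanSpace ℝ (Fin 2)) b) := by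
  have hkp : (0 : ℝ) ≤ k := by positivity
  let S : Set ℤ := {n | s < n ∧ ∃ m : ℤ, |α * m - n| < 1 ∧
    (α * m - n) ^ 2 + (k : ℝ) ^ 2 ≤ s ^ 2}
  have hS : S.Infinite := by
    apply Set.infinite_of_forall_exists_gt
    intro a
    obtain ⟨N, hN⟩ := exists_nat_gt (max (a : ℝ) s)
    have hN1 := (le_max_left _ _).trans_lt hN
    have hN2 := (le_max_right _ _).trans_lt hN
    obtain ⟨n, m, hn, hm⟩ := approx h0 (min 1 (s - k)) (lt_min one_pos (by linarith)) N
    have hn' : (N : ℝ) < n := by exact_mod_cast hn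
    have m1 := hm.trans_le (min_le_left _ _)
    have m2 := hm.trans_le (min_le_right _ _)
    refine ⟨n, ⟨by linarith, m, m1, ?_⟩, ?_⟩
    · rw [← sq_abs]
      nlinarith [abs_nonneg (α * m - n)]
    · have : (a : ℝ) < n := by linarith
      exact_mod_cast this
  have : Infinite S := hS.to_subtype
  refine Infinite.of_injective (fun n : S => Quot.mk _ ⟨P t α k n 0, ⟨n, 0, ⟨by omega, by tauto⟩, rfl⟩⟩) ?_
  rintro ⟨n, hn, m, m1, m2⟩ ⟨n', hn', _⟩ h
  have h' := ((ce_equiv (XX t α k) (t * s)).quot_mk_eq_iff _ _).1 h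
  exact Subtype.ext (not_equiv t α ht hα k hk s hs n n' m hn hn' m1 m2 h')

end TB

/-- For every `t > 0` and every `M > 0` there are `k > M` and a
`t`-bonded set `X ⊆ ℝ²` with finitely many classes of `kt`-clusters but infinitely
many classes of `(kt + ε)`-clusters for every `ε > 0`. -/
theorem exists_t_bonded_not_finite_type (t M : ℝ) (ht : 0 < t) (hM : 0 < M) :
    ∃ k : ℝ, M < k ∧ ∃ X : Set (EuclideanSpace ℝ (Fin 2)),
      TBonded X t ∧
      Finite (Quot fun a b : X =>
        ClusterEquiv X (k * t) (a : EuclideanSpace ℝ (Fin 2)) b) ∧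
      ∀ ε > 0, Infinite (Quot fun a b : X =>
        ClusterEquiv X (k * t + ε) (a : EuclideanSpace ℝ (Fin 2)) b) := by
  obtain ⟨k, hk⟩ := exists_nat_gt M
  have hk1 : 1 ≤ k := by
    have : (0 : ℝ) < k := hM.trans hk
    exact_mod_cast this
  have hα : Irrational (√2 - 1) := by
    simpa using irrational_sqrt_two.sub_intCast 1
  have h0 : 0 < √2 - 1 := by
    have : 1 < √2 := by rw [Real.lt_sqrt] <;> norm_num
    linarith
  have h1 : √2 - 1 < 1 := by
    have : √2 < 2 := by rw [Real.sqrt_lt'] <;> norm_num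
    linarith
  refine ⟨k, hk, TB.XX t (√2 - 1) k, ⟨TB.ud t _ ht h0 h1 k, TB.span t _ ht k hk1 h0, ?_⟩, ?_, ?_⟩
  · rintro _ ⟨m, j, hV, rfl⟩ _ ⟨m', j', hV', rfl⟩
    exact TB.chain_of ⟨m, j, hV, rfl⟩
      ((TB.rtg_symm (TB.conn t _ ht h0 h1 k m j hV)).trans (TB.conn t _ ht h0 h1 k m' j' hV'))
  · rw [mul_comm (k : ℝ) t]
    exact TB.fin_part t _ ht hα h0 h1 k hk1
  · intro ε hε
    have : (k : ℝ) * t + ε = t * (k + ε / t) := by field_simp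
    rw [this]
    refine TB.inf_part t _ ht hα h0 k hk1 _ ?_
    have : 0 < ε / t := by positivity
    linarith
end
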